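/- For T, S ∈ ST(λ_b), let w_{T,S} be a permutation of {1,…,N} with T = w_{T,S}·S (acting on tableaux through positions of the residue sequence, as in the τ-action), and set c_{T,S} := e(res(T)) τ_{w_{T,S}} e(res(S)) ∈ R^{Λ₁}(ξ). Then c_{T,S} does not depend on the choice of reduced expression of w_{T,S}, and the set {c_{T,S} : T, S ∈ ST(λ_b)} is a k-basis of R^{Λ₁}(ξ); in particular dim_k R^{Λ₁}(ξ) = |ST(λ_b)|². -/

import Mathlib

open scoped Classical

namespace QHA

variable (k : Type) [Field k]

/-- Generators of the quiver Hecke algebra `R(β)` on `m` strands with vertex set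
`Fin n`: the idempotents `e(ν)`, the polynomial generators `x_p` and the
intertwiners `τ_j` (acting on strands `j`, `j+1`, 0-based). -/
inductive Gen (n m : ℕ) : Type
  | e (ν : Fin m → Fin n) : Gen n m
  | x (p : Fin m) : Gen n m
  | t (j : ℕ) (h : j + 1 < m) : Gen n m

/-- The free algebra on the generators. -/
abbrev FA (n m : ℕ) := FreeAlgebra k (Gen n m)

variable {n m : ℕ}

noncomputable def Eg (ν : Fin m → Fin n) : FA k n m := FreeAlgebra.ι k (Gen.e ν)
noncomputable def Xg (p : Fin m) : FA k n m := FreeAlgebra.ι k (Gen.x p)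
noncomputable def Tg (j : ℕ) (h : j + 1 < m) : FA k n m := FreeAlgebra.ι k (Gen.t j h)

/-- The transposition of the strands `j`, `j+1` (0-based). -/
def posSwap (j : ℕ) (h : j + 1 < m) : Equiv.Perm (Fin m) :=
  Equiv.swap ⟨j, Nat.lt_of_succ_lt h⟩ ⟨j + 1, h⟩

/-- The place-permutation `s_j ν` of a sequence `ν`. -/
def swapSeq (j : ℕ) (h : j + 1 < m) (ν : Fin m → Fin n) : Fin m → Fin n :=
  ν ∘ posSwap j h

/-- Evaluation of a two-variable polynomial `p(u,v)` at two elements of a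
(possibly noncommutative) `k`-algebra, as `Σ t_{p,q} a^p b^q`. -/
noncomputable def eval2 {A : Type} [Ring A] [Algebra k A]
    (p : MvPolynomial (Fin 2) k) (a b : A) : A :=
  ∑ d ∈ p.support, algebraMap k A (MvPolynomial.coeff d p) * (a ^ d 0 * b ^ d 1)

/-- Evaluation of a three-variable polynomial. -/
noncomputable def eval3 {A : Type} [Ring A] [Algebra k A]
    (p : MvPolynomial (Fin 3) k) (a b c : A) : A :=
  ∑ d ∈ p.support, algebraMap k A (MvPolynomial.coeff d p) * (a ^ d 0 * b ^ d 1 * c ^ d 2)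

/-- For `p = Q(u,v)`, the polynomial `(Q(u,v) - Q(w,v))/(u - w)` in the three
variables `u = X 0`, `v = X 1`, `w = X 2` (exact division by the monic `u - w`). -/
noncomputable def Qbar (p : MvPolynomial (Fin 2) k) : MvPolynomial (Fin 3) k :=
  (MvPolynomial.finSuccEquiv k 2).symm
    (Polynomial.divByMonic
      ((MvPolynomial.finSuccEquiv k 2)
        (MvPolynomial.rename (fun i : Fin 2 => if i = 0 then (0 : Fin 3) else 1) p -
          MvPolynomial.rename (fun i : Fin 2 => if i = 0 then (2 : Fin 3) else 1) p))
      (Polynomial.X - Polynomial.C (MvPolynomial.X 1)))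

/-- Admissibility of the family `Q_{i,j}(u,v)` of polynomials with respect to the
(symmetrizable) Cartan matrix `A` and symmetrizing integers `d`
(so `(α_i, α_j) = d_i A_{i j}`):
`Q_{i,i} = 0`; `Q_{j,i}(u,v) = Q_{i,j}(v,u)`; `Q_{i,j} = 1` whenever `(α_i,α_j) = 0`
(`i ≠ j`); `Q_{i,j}` is supported on `(p,q)` with
`(α_i,α_i) p + (α_j,α_j) q = -2(α_i,α_j)`; and `t_{i,j;-a_{ij},0} ≠ 0`. -/
def QAdmissible (A : Fin n → Fin n → ℤ) (d : Fin n → ℤ)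
    (Q : Fin n → Fin n → MvPolynomial (Fin 2) k) : Prop :=
  (∀ i, Q i i = 0) ∧
  (∀ i j, Q j i = MvPolynomial.rename (Equiv.swap (0 : Fin 2) 1) (Q i j)) ∧
  (∀ i j, i ≠ j → d i * A i j = 0 → Q i j = 1) ∧
  (∀ i j, i ≠ j → ∀ dd ∈ (Q i j).support,
    (2 * d i) * (dd 0 : ℤ) + (2 * d j) * (dd 1 : ℤ) = -2 * (d i * A i j)) ∧
  (∀ i j, i ≠ j →
    MvPolynomial.coeff (Finsupp.single (0 : Fin 2) (-(A i j)).toNat) (Q i j) ≠ 0)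

/-- The defining relations of the quiver Hecke algebra `R(β)`, where
`S ⊆ I^m` is the set of admissible sequences (`I^β`; `e(ν) = 0` for `ν ∉ S`). -/
inductive Rel (Q : Fin n → Fin n → MvPolynomial (Fin 2) k) (S : Set (Fin m → Fin n)) :
    FA k n m → FA k n m → Prop
  | e_orth (ν ν' : Fin m → Fin n) (hne : ν ≠ ν') : Rel Q S (Eg k ν * Eg k ν') 0
  | e_idem (ν : Fin m → Fin n) : Rel Q S (Eg k ν * Eg k ν) (Eg k ν)
  | e_sum : Rel Q S (∑ ν : Fin m → Fin n, Eg k ν) 1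
  | e_out (ν : Fin m → Fin n) (hν : ν ∉ S) : Rel Q S (Eg k ν) 0
  | xx (p q : Fin m) : Rel Q S (Xg k p * Xg k q) (Xg k q * Xg k p)
  | xe (p : Fin m) (ν : Fin m → Fin n) : Rel Q S (Xg k p * Eg k ν) (Eg k ν * Xg k p)
  | te (j : ℕ) (h : j + 1 < m) (ν : Fin m → Fin n) :
      Rel Q S (Tg k j h * Eg k ν) (Eg k (swapSeq j h ν) * Tg k j h)
  | tt (a : ℕ) (ha : a + 1 < m) (b : ℕ) (hb : b + 1 < m) (hab : a + 1 < b ∨ b + 1 < a) :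
      Rel Q S (Tg k a ha * Tg k b hb) (Tg k b hb * Tg k a ha)
  | tsq (j : ℕ) (h : j + 1 < m) (ν : Fin m → Fin n) :
      Rel Q S (Tg k j h * Tg k j h * Eg k ν)
        (eval2 k (Q (ν ⟨j, Nat.lt_of_succ_lt h⟩) (ν ⟨j + 1, h⟩))
          (Xg k ⟨j, Nat.lt_of_succ_lt h⟩) (Xg k ⟨j + 1, h⟩) * Eg k ν)
  | tx_left (j : ℕ) (h : j + 1 < m) (ν : Fin m → Fin n)
      (hv : ν ⟨j, Nat.lt_of_succ_lt h⟩ = ν ⟨j + 1, h⟩) :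
      Rel Q S (Tg k j h * Xg k ⟨j, Nat.lt_of_succ_lt h⟩ * Eg k ν)
        (Xg k ⟨j + 1, h⟩ * Tg k j h * Eg k ν - Eg k ν)
  | tx_right (j : ℕ) (h : j + 1 < m) (ν : Fin m → Fin n)
      (hv : ν ⟨j, Nat.lt_of_succ_lt h⟩ = ν ⟨j + 1, h⟩) :
      Rel Q S (Tg k j h * Xg k ⟨j + 1, h⟩ * Eg k ν)
        (Xg k ⟨j, Nat.lt_of_succ_lt h⟩ * Tg k j h * Eg k ν + Eg k ν)
  | tx_comm (j : ℕ) (h : j + 1 < m) (ν : Fin m → Fin n) (p : Fin m)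
      (hcase : ν ⟨j, Nat.lt_of_succ_lt h⟩ ≠ ν ⟨j + 1, h⟩ ∨ ((p : ℕ) ≠ j ∧ (p : ℕ) ≠ j + 1)) :
      Rel Q S (Tg k j h * Xg k p * Eg k ν) (Xg k (posSwap j h p) * Tg k j h * Eg k ν)
  | braid_ne (j : ℕ) (h1 : j + 1 < m) (h2 : j + 2 < m) (ν : Fin m → Fin n)
      (hv : ν ⟨j, by omega⟩ ≠ ν ⟨j + 2, h2⟩) :
      Rel Q S
        (Tg k (j + 1) (by omega) * Tg k j h1 * Tg k (j + 1) (by omega) * Eg k ν)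
        (Tg k j h1 * Tg k (j + 1) (by omega) * Tg k j h1 * Eg k ν)
  | braid_eq (j : ℕ) (h1 : j + 1 < m) (h2 : j + 2 < m) (ν : Fin m → Fin n)
      (hv : ν ⟨j, by omega⟩ = ν ⟨j + 2, h2⟩) :
      Rel Q S
        (Tg k (j + 1) (by omega) * Tg k j h1 * Tg k (j + 1) (by omega) * Eg k ν)
        (Tg k j h1 * Tg k (j + 1) (by omega) * Tg k j h1 * Eg k ν +
          eval3 k (Qbar k (Q (ν ⟨j, by omega⟩) (ν ⟨j + 1, h1⟩)))
            (Xg k ⟨j, by omega⟩) (Xg k ⟨j + 1, h1⟩) (Xg k ⟨j + 2, h2⟩) * Eg k ν)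

/-- The extra cyclotomic relations `x_m^{⟨h_{ν_m}, Λ⟩} e(ν) = 0` (`ν ∈ I^β`),
where `Λ` is written in fundamental-weight coordinates, so `⟨h_i, Λ⟩ = Λ i`. -/
inductive CycRel (Λ : Fin n → ℤ) (S : Set (Fin m → Fin n)) :
    FA k n m → FA k n m → Prop
  | cyc (ν : Fin m → Fin n) (hν : ν ∈ S) (p : Fin m) (hp : (p : ℕ) + 1 = m) :
      CycRel Λ S (Xg k p ^ (Λ (ν p)).toNat * Eg k ν) 0

/-- Relations of the cyclotomic quiver Hecke algebra `R^Λ(β)`. -/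
def CRel (Q : Fin n → Fin n → MvPolynomial (Fin 2) k) (S : Set (Fin m → Fin n))
    (Λ : Fin n → ℤ) : FA k n m → FA k n m → Prop :=
  fun a b => Rel k Q S a b ∨ CycRel k Λ S a b

/-- The `j`-th column of the Cartan matrix: the simple root `α_j` written in
fundamental-weight coordinates (`⟨h_i, α_j⟩ = A i j`). -/
def αcol (A : Fin n → Fin n → ℤ) (j : Fin n) : Fin n → ℤ := fun i => A i j

/-- `FPath A Λ [i₁, …, i_ℓ] ξ` means `f̃_{i₁} ⋯ f̃_{i_ℓ} Λ = ξ` in the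
minuscule crystal realized on the Weyl orbit of `Λ`:
`f̃_j μ = μ - α_j` whenever `⟨h_j, μ⟩ = 1` (and is undefined otherwise). -/
inductive FPath (A : Fin n → Fin n → ℤ) (Λ : Fin n → ℤ) :
    List (Fin n) → (Fin n → ℤ) → Prop
  | nil : FPath A Λ [] Λ
  | cons (j : Fin n) (l : List (Fin n)) (ξ : Fin n → ℤ) :
      FPath A Λ l ξ → ξ j = 1 → FPath A Λ (j :: l) (ξ - αcol A j)

/-- The simple reflection `s_j μ = μ - ⟨h_j, μ⟩ α_j` on the weight lattice. -/
def sRef (A : Fin n → Fin n → ℤ) (j : Fin n) (μ : Fin n → ℤ) : Fin n → ℤ :=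
  fun i => μ i - μ j * A i j

/-- The Weyl group orbit of `Λ` (the Weyl group being generated by the
involutions `s_j`, its orbit consists of images under words in the `s_j`). -/
def orbitW (A : Fin n → Fin n → ℤ) (Λ : Fin n → ℤ) : Set (Fin n → ℤ) :=
  {ξ | ∃ l : List (Fin n), l.foldr (sRef A) Λ = ξ}

end QHA

namespace QHA

variable (k : Type) [Field k]

/-- The Cartan matrix of type `Bₙ` (0-based labeling; the first node carries the
short simple root: `a_{1,2} = -2`, `a_{2,1} = -1` in 1-based labels, and
`1 — 2 — ⋯ — n` is a chain). -/
def AB (n : ℕ) : Fin n → Fin n → ℤ := fun i j =>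
  if i = j then 2
  else if (i : ℕ) = 0 ∧ (j : ℕ) = 1 then -2
  else if (i : ℕ) + 1 = (j : ℕ) ∨ (j : ℕ) + 1 = (i : ℕ) then -1
  else 0

/-- The symmetrizing integers of type `Bₙ`: `d₁ = 1` and `d_i = 2` for `i ≥ 2`. -/
def dB (n : ℕ) : Fin n → ℤ := fun i => if (i : ℕ) = 0 then 1 else 2

/-- The shifted Young diagram of a strict partition `l = (λ₁ > λ₂ > ⋯)`,
as the set of (1-based) boxes `(i,j)` with `1 ≤ i ≤ ℓ`, `i ≤ j ≤ λᵢ + i - 1`. -/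
def diagram (l : List ℕ) : Set (ℕ × ℕ) :=
  {b | b.1 - 1 < l.length ∧ 1 ≤ b.1 ∧ b.1 ≤ b.2 ∧ b.2 + 1 ≤ l.getD (b.1 - 1) 0 + b.1}

/-- The shifted Young diagram as a finset. -/
def diagFinset (l : List ℕ) : Finset (ℕ × ℕ) :=
  (Finset.range l.length).biUnion fun i =>
    (Finset.Icc (i + 1) (l.getD i 0 + i)).image fun j => (i + 1, j)

/-- The residue `res(i,j) = j - i + 1` of a box. -/
def resBox (b : ℕ × ℕ) : ℕ := b.2 + 1 - b.1

/-- The residue of a box as an element of `I = Fin n` (`0`-based: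
the box `(i,j)` has `0`-based residue `j - i`). -/
def resFin (n : ℕ) (hn : 0 < n) (b : ℕ × ℕ) : Fin n :=
  ⟨min (b.2 - b.1) (n - 1), by omega⟩

/-- `f : Fin N → ℕ × ℕ` is a standard tableau of shifted shape `l`, where `f k` is
the box containing the entry `k+1`. -/
def IsSYT (l : List ℕ) (N : ℕ) (f : Fin N → ℕ × ℕ) : Prop :=
  Function.Injective f ∧ Set.range f = diagram l ∧
    (∀ a b : Fin N, (f a).1 = (f b).1 → (f a).2 < (f b).2 → a < b) ∧
    (∀ a b : Fin N, (f a).2 = (f b).2 → (f a).1 < (f b).1 → a < b)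

/-- The residue sequence `res(T) = (res(b_N), …, res(b₁)) ∈ I^N` of a tableau. -/
def resSeq (n : ℕ) (hn : 0 < n) {N : ℕ} (f : Fin N → ℕ × ℕ) : Fin N → Fin n :=
  fun p => resFin n hn (f p.rev)

/-- The weight `wt(λ) = Λ₁ - Σ_{b ∈ λ} α_{res(b)}`, in fundamental-weight
coordinates, of type `Bₙ`. -/
noncomputable def wtP (n : ℕ) (hn : 0 < n) (l : List ℕ) : Fin n → ℤ :=
  Pi.single ⟨0, hn⟩ 1 - ∑ b ∈ diagFinset l, αcol (AB n) (resFin n hn b)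

/-- Exchanging in `T` the entries occupying positions `j`, `j+1` of the residue
sequence, i.e. the entries `N-j` and `N-j-1`. -/
def swapEnt {N : ℕ} (j : ℕ) (h : j + 1 < N) (f : Fin N → ℕ × ℕ) : Fin N → ℕ × ℕ :=
  f ∘ Equiv.swap (Fin.rev ⟨j, Nat.lt_of_succ_lt h⟩) (Fin.rev ⟨j + 1, h⟩)

section Ops

variable {N : ℕ} (n : ℕ) (hn : 0 < n) (P : (Fin N → ℕ × ℕ) → Prop)

/-- The vector space with basis the tableaux satisfying `P`. -/
abbrev TabV : Type := {f : Fin N → ℕ × ℕ // P f} → k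

/-- The prescribed action of `e(μ)`: projection onto the span of the tableaux
with residue sequence `μ`. -/
noncomputable def eOpTab (μ : Fin N → Fin n) : Module.End k (TabV k P) :=
  LinearMap.pi fun T => if resSeq n hn T.val = μ then LinearMap.proj T else 0

/-- The prescribed action of `τ_j`: `T ↦ s_j T` if `s_j T` still satisfies `P`,
and `0` otherwise. -/
noncomputable def tOpTab (j : ℕ) (h : j + 1 < N) : Module.End k (TabV k P) :=
  LinearMap.pi fun T =>
    if hh : P (swapEnt j h T.val) then
      LinearMap.proj (⟨swapEnt j h T.val, hh⟩ : {f : Fin N → ℕ × ℕ // P f}) else 0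

end Ops

section
variable {n : ℕ} (A : Fin n → Fin n → ℤ) (Λ ξ : Fin n → ℤ) (ℓ : ℕ)

/-- `I^β` for `β = Λ - ξ`. -/
def Iβ : Set (Fin ℓ → Fin n) :=
  {ν | ∑ p : Fin ℓ, αcol A (ν p) = fun i => Λ i - ξ i}
end

end QHA

namespace QHA

section Words

variable (k : Type) [Field k] {n : ℕ} (N : ℕ)

/-- Words in the adjacent transpositions of the symmetric group `S_N`. -/
abbrev Word : Type := List {j : ℕ // j + 1 < N}

/-- The permutation given by a word. -/
def wordProd (w : Word N) : Equiv.Perm (Fin N) :=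
  (w.map fun j => posSwap j.1 j.2).prod

/-- The Coxeter length of a permutation with respect to adjacent transpositions. -/
noncomputable def permLength (σ : Equiv.Perm (Fin N)) : ℕ :=
  sInf {r | ∃ w : Word N, wordProd N w = σ ∧ w.length = r}

/-- `w` is a reduced word for `σ`. -/
def IsReducedWord (σ : Equiv.Perm (Fin N)) (w : Word N) : Prop :=
  wordProd N w = σ ∧ w.length = permLength N σ

/-- `τ_w` for a word `w`. -/
noncomputable def tauWord (w : Word N) : FA k n N :=
  (w.map fun j => Tg k j.1 j.2).prod

end Words

/-- `T = σ · S`, where the permutation `σ` acts on tableaux through the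
positions of the residue sequence (position `p` of `res(T)` is occupied by the
entry `N - p`). -/
def permTab {N : ℕ} (σ : Equiv.Perm (Fin N)) (T S : Fin N → ℕ × ℕ) : Prop :=
  ∀ q : Fin N, S q = T (Fin.rev (σ (Fin.rev q)))

section Inv

variable {N : ℕ}

theorem posSwap_mul_self (j : ℕ) (h : j + 1 < N) : posSwap j h * posSwap j h = 1 := by
  simp [posSwap]

theorem posSwap_inv (j : ℕ) (h : j + 1 < N) : (posSwap j h)⁻¹ = posSwap j h := by
  simp [posSwap]

theorem posSwap_val (j : ℕ) (h : j + 1 < N) (p : Fin N) :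
    ((posSwap j h p : Fin N) : ℕ) =
      if (p : ℕ) = j then j + 1 else if (p : ℕ) = j + 1 then j else p := by
  unfold posSwap
  rw [Equiv.swap_apply_def]
  simp only [Fin.ext_iff]
  split_ifs <;> rfl

/-- The number of inversions of a permutation. -/
def invN (σ : Equiv.Perm (Fin N)) : ℕ :=
  (Finset.univ.filter fun pq : Fin N × Fin N => pq.1 < pq.2 ∧ σ pq.2 < σ pq.1).card

theorem invN_one : invN (1 : Equiv.Perm (Fin N)) = 0 := by
  unfold invN
  rw [Finset.card_eq_zero, Finset.filter_eq_empty_iff]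
  rintro ⟨p, q⟩ _ ⟨h1, h2⟩
  exact absurd h1 (not_lt.mpr (le_of_lt h2))

theorem invN_up (σ : Equiv.Perm (Fin N)) (j : ℕ) (h : j + 1 < N)
    (hlt : σ⁻¹ ⟨j, Nat.lt_of_succ_lt h⟩ < σ⁻¹ ⟨j + 1, h⟩) :
    invN (posSwap j h * σ) = invN σ + 1 := by
  unfold invN
  rw [← Finset.card_insert_of_notMem
    (a := (σ⁻¹ ⟨j, Nat.lt_of_succ_lt h⟩, σ⁻¹ ⟨j + 1, h⟩))]
  · congr 1
    ext ⟨p, q⟩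
    rw [Finset.mem_filter, Finset.mem_insert, Finset.mem_filter]
    simp only [Finset.mem_univ, true_and, Prod.mk.injEq,
      Equiv.Perm.mul_apply, Equiv.Perm.eq_inv_iff_eq]
    rw [Fin.lt_def (a := (posSwap j h) (σ q)), posSwap_val, posSwap_val,
      Fin.lt_def (a := σ q), Fin.ext_iff, Fin.ext_iff]
    simp only
    have hne : p < q → (σ p : ℕ) ≠ σ q := fun h1 h2 =>
      absurd (σ.injective (Fin.ext h2)) (ne_of_lt h1)
    have h3 : (σ p : ℕ) = j → (σ q : ℕ) = j + 1 → p < q := by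
      intro h1 h2
      have e1 : p = σ⁻¹ ⟨j, Nat.lt_of_succ_lt h⟩ := by
        rw [Equiv.Perm.eq_inv_iff_eq]; exact Fin.ext h1
      have e2 : q = σ⁻¹ ⟨j + 1, h⟩ := by
        rw [Equiv.Perm.eq_inv_iff_eq]; exact Fin.ext h2
      rw [e1, e2]; exact hlt
    have h4 : (σ q : ℕ) = j → (σ p : ℕ) = j + 1 → ¬ p < q := by
      intro h1 h2
      have e1 : q = σ⁻¹ ⟨j, Nat.lt_of_succ_lt h⟩ := by
        rw [Equiv.Perm.eq_inv_iff_eq]; exact Fin.ext h1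
      have e2 : p = σ⁻¹ ⟨j + 1, h⟩ := by
        rw [Equiv.Perm.eq_inv_iff_eq]; exact Fin.ext h2
      rw [e1, e2]; exact not_lt.mpr (le_of_lt hlt)
    by_cases hpq : p < q
    · have := hne hpq
      have h5 : ¬ ((σ q : ℕ) = j ∧ (σ p : ℕ) = j + 1) := fun hh => h4 hh.1 hh.2 hpq
      simp only [hpq, true_and]
      clear h3 h4 hne
      split_ifs <;> omega
    · have h5 : ¬ ((σ p : ℕ) = j ∧ (σ q : ℕ) = j + 1) := fun hh => hpq (h3 hh.1 hh.2)
      simp only [hpq, false_and, or_false, false_iff]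
      exact h5
  · simp

theorem invN_down (σ : Equiv.Perm (Fin N)) (j : ℕ) (h : j + 1 < N)
    (hlt : σ⁻¹ ⟨j + 1, h⟩ < σ⁻¹ ⟨j, Nat.lt_of_succ_lt h⟩) :
    invN (posSwap j h * σ) + 1 = invN σ := by
  have := invN_up (posSwap j h * σ) j h (by
    rw [mul_inv_rev, posSwap_inv]
    simpa [posSwap] using hlt)
  rw [← this, ← mul_assoc, posSwap_mul_self, one_mul]

theorem inv_ne (σ : Equiv.Perm (Fin N)) (j : ℕ) (h : j + 1 < N) :
    σ⁻¹ ⟨j, Nat.lt_of_succ_lt h⟩ < σ⁻¹ ⟨j + 1, h⟩ ∨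
      σ⁻¹ ⟨j + 1, h⟩ < σ⁻¹ ⟨j, Nat.lt_of_succ_lt h⟩ := by
  apply lt_or_gt_of_ne
  intro hh
  have := (σ⁻¹).injective hh
  simp at this

theorem wordProd_cons (a : {j : ℕ // j + 1 < N}) (w : Word N) :
    wordProd N (a :: w) = posSwap a.1 a.2 * wordProd N w := by
  simp [wordProd]

theorem invN_wordProd_le (w : Word N) : invN (wordProd N w) ≤ w.length := by
  induction w with
  | nil => simp [wordProd, invN_one]
  | cons a w ih =>
    rw [wordProd_cons, List.length_cons]
    rcases inv_ne (wordProd N w) a.1 a.2 with h | h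
    · rw [invN_up _ _ _ h]; omega
    · have := invN_down _ _ _ h; omega

theorem exists_descent (σ : Equiv.Perm (Fin N)) (hσ : σ ≠ 1) :
    ∃ (j : ℕ) (h : j + 1 < N), σ⁻¹ ⟨j + 1, h⟩ < σ⁻¹ ⟨j, Nat.lt_of_succ_lt h⟩ := by
  by_contra hcon
  push Not at hcon
  apply hσ
  have hmono : StrictMono (σ⁻¹ : Equiv.Perm (Fin N)) := by
    cases N with
    | zero => intro a; exact a.elim0
    | succ M =>
      rw [Fin.strictMono_iff_lt_succ]
      intro i
      rcases inv_ne σ i.1 (by omega) with h | h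
      · exact h
      · exact absurd h (not_lt.mpr (hcon _ _))
  have : σ⁻¹ = 1 := by
    ext i
    have := hmono.id_le
    have h2 := hmono.le_id
    have := le_antisymm (h2 i) (this i)
    simp at this
    simp [this]
  simpa using this

theorem exists_word (d : ℕ) : ∀ σ : Equiv.Perm (Fin N), invN σ = d →
    ∃ w : Word N, wordProd N w = σ ∧ w.length = invN σ := by
  induction d with
  | zero =>
    intro σ h
    by_cases hσ : σ = 1
    · exact ⟨[], by simp [wordProd, hσ], by simp [h]⟩
    · obtain ⟨j, hj, hlt⟩ := exists_descent σ hσ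
      have := invN_down _ _ _ hlt
      omega
  | succ d ih =>
    intro σ h
    have hσ : σ ≠ 1 := by
      rintro rfl
      rw [invN_one] at h; omega
    obtain ⟨j, hj, hlt⟩ := exists_descent σ hσ
    have h1 := invN_down _ _ _ hlt
    obtain ⟨w, hw, hl⟩ := ih (posSwap j hj * σ) (by omega)
    refine ⟨⟨j, hj⟩ :: w, ?_, ?_⟩
    · rw [wordProd_cons, hw, ← mul_assoc, posSwap_mul_self, one_mul]
    · rw [List.length_cons, hl]; omega

theorem permLength_eq (σ : Equiv.Perm (Fin N)) : permLength N σ = invN σ := by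
  obtain ⟨w, hw, hl⟩ := exists_word _ σ rfl
  apply le_antisymm
  · exact Nat.sInf_le ⟨w, hw, hl⟩
  · apply le_csInf
    · exact ⟨_, w, hw, rfl⟩
    · rintro r ⟨w', hw', rfl⟩
      rw [← hw']
      exact invN_wordProd_le w'

theorem reduced_cons (a : {j : ℕ // j + 1 < N}) (w : Word N)
    (h : (a :: w).length = invN (wordProd N (a :: w))) :
    w.length = invN (wordProd N w) ∧
      (wordProd N (a :: w))⁻¹ ⟨a.1 + 1, a.2⟩ <
        (wordProd N (a :: w))⁻¹ ⟨a.1, Nat.lt_of_succ_lt a.2⟩ := by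
  have h1 := invN_wordProd_le w
  rw [List.length_cons] at h
  rcases inv_ne (wordProd N (a :: w)) a.1 a.2 with h2 | h2
  · have := invN_up _ _ _ h2
    rw [wordProd_cons] at this h
    rw [← mul_assoc, posSwap_mul_self, one_mul] at this
    omega
  · have := invN_down _ _ _ h2
    refine ⟨?_, h2⟩
    rw [wordProd_cons] at this h
    rw [← mul_assoc, posSwap_mul_self, one_mul] at this
    omega

end Inv

section Comb

variable {n N : ℕ}

/-- Number of positions `≥ s` carrying the letter `j`. -/
def cnt (ν : Fin N → Fin n) (s j : ℕ) : ℕ :=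
  (Finset.univ.filter fun q : Fin N => s ≤ (q : ℕ) ∧ ((ν q : Fin n) : ℕ) = j).card

/-- The letter `j` can be added to the state `c`. -/
def gd (c : ℕ → ℕ) (j : ℕ) : Prop :=
  (j = 0 ∨ c (j - 1) = c j + 1) ∧ c (j + 1) = c j

def GoodAt (ν : Fin N → Fin n) (p : Fin N) : Prop :=
  gd (cnt ν ((p : ℕ) + 1)) (ν p)

theorem cnt_step (ν : Fin N → Fin n) (p : Fin N) (j : ℕ) :
    cnt ν p j = cnt ν ((p : ℕ) + 1) j + if ((ν p : Fin n) : ℕ) = j then 1 else 0 := by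
  unfold cnt
  split_ifs with h
  · rw [← Finset.card_insert_of_notMem (a := p)]
    · congr 1
      ext q
      simp only [Finset.mem_filter, Finset.mem_univ, true_and, Finset.mem_insert]
      constructor
      · rintro ⟨h1, h2⟩
        rcases Nat.eq_or_lt_of_le h1 with h3 | h3
        · left; exact Fin.ext h3.symm
        · right; exact ⟨h3, h2⟩
      · rintro (rfl | ⟨h1, h2⟩)
        · exact ⟨le_refl _, h⟩
        · exact ⟨by omega, h2⟩
    · simp
  · rw [add_zero]
    congr 1
    ext q
    simp only [Finset.mem_filter, Finset.mem_univ, true_and]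
    constructor
    · rintro ⟨h1, h2⟩
      refine ⟨?_, h2⟩
      rcases Nat.eq_or_lt_of_le h1 with h3 | h3
      · have : p = q := Fin.ext h3
        subst this
        exact absurd h2 h
      · exact h3
    · rintro ⟨h1, h2⟩
      exact ⟨by omega, h2⟩

theorem cnt_top (ν : Fin N → Fin n) (s j : ℕ) (hs : N ≤ s) : cnt ν s j = 0 := by
  unfold cnt
  rw [Finset.card_eq_zero, Finset.filter_eq_empty_iff]
  rintro q _ ⟨h, _⟩
  omega

theorem cnt_big (ν : Fin N → Fin n) (s j : ℕ) (hj : n ≤ j) : cnt ν s j = 0 := by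
  unfold cnt
  rw [Finset.card_eq_zero, Finset.filter_eq_empty_iff]
  rintro q _ ⟨_, h⟩
  have := (ν q).2
  omega

theorem cnt_anti (ν : Fin N → Fin n) {s s' : ℕ} (j : ℕ) (hs : s ≤ s') :
    cnt ν s' j ≤ cnt ν s j := by
  unfold cnt
  apply Finset.card_le_card
  intro q
  simp only [Finset.mem_filter, Finset.mem_univ, true_and]
  rintro ⟨h1, h2⟩
  exact ⟨by omega, h2⟩

theorem posSwap_posSwap (j : ℕ) (h : j + 1 < N) (p : Fin N) :
    posSwap j h (posSwap j h p) = p := by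
  have := posSwap_mul_self j h
  rw [← Equiv.Perm.mul_apply, this]; rfl

theorem cnt_swap (ν : Fin N → Fin n) (a : ℕ) (h : a + 1 < N) (s j : ℕ) (hs : s ≠ a + 1) :
    cnt (swapSeq a h ν) s j = cnt ν s j := by
  unfold cnt
  apply Finset.card_bijective (posSwap a h) (posSwap a h).bijective
  intro q
  rw [Finset.mem_filter, Finset.mem_filter]
  simp only [Finset.mem_univ, true_and, swapSeq, Function.comp]
  have := posSwap_val a h q
  split_ifs at this <;> rw [this] <;> constructor <;> rintro ⟨h1, h2⟩ <;>
    refine ⟨by omega, h2⟩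

theorem swapSeq_left (ν : Fin N → Fin n) (a : ℕ) (h : a + 1 < N) :
    swapSeq a h ν ⟨a, Nat.lt_of_succ_lt h⟩ = ν ⟨a + 1, h⟩ := by
  simp [swapSeq, posSwap]

theorem swapSeq_right (ν : Fin N → Fin n) (a : ℕ) (h : a + 1 < N) :
    swapSeq a h ν ⟨a + 1, h⟩ = ν ⟨a, Nat.lt_of_succ_lt h⟩ := by
  simp [swapSeq, posSwap]

theorem posSwap_other (a : ℕ) (h : a + 1 < N) (p : Fin N) (h1 : (p : ℕ) ≠ a)
    (h2 : (p : ℕ) ≠ a + 1) : posSwap a h p = p := by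
  apply Fin.ext
  rw [posSwap_val]; simp [h1, h2]

theorem swapSeq_other (ν : Fin N → Fin n) (a : ℕ) (h : a + 1 < N) (p : Fin N) (h1 : (p : ℕ) ≠ a)
    (h2 : (p : ℕ) ≠ a + 1) : swapSeq a h ν p = ν p := by
  simp [swapSeq, posSwap_other a h p h1 h2]

theorem swapSeq_swapSeq (ν : Fin N → Fin n) (a : ℕ) (h : a + 1 < N) :
    swapSeq a h (swapSeq a h ν) = ν := by
  funext p
  simp [swapSeq, posSwap_posSwap]

/-- adjacency of letters -/
def adjL (i j : ℕ) : Prop := i + 1 = j ∨ j + 1 = i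

theorem gd_adj {c : ℕ → ℕ} {i j : ℕ} (h : adjL i j) (hi : gd c i) : ¬ gd c j := by
  rintro ⟨h1, h2⟩
  obtain ⟨h3, h4⟩ := hi
  rcases h with rfl | rfl
  · simp at h1; omega
  · simp at h3; omega

/-- letters commute -/
def comm (i j : ℕ) : Prop := i ≠ j ∧ ¬ adjL i j

theorem comm_symm {i j : ℕ} (h : comm i j) : comm j i := by
  unfold comm adjL at *; omega

theorem good_eq_false (ν : Fin N → Fin n) (a : ℕ) (h : a + 1 < N)
    (hv : ν ⟨a, Nat.lt_of_succ_lt h⟩ = ν ⟨a + 1, h⟩)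
    (h1 : GoodAt ν ⟨a + 1, h⟩) (h2 : GoodAt ν ⟨a, Nat.lt_of_succ_lt h⟩) : False := by
  unfold GoodAt at *
  rw [hv] at h2
  set j : ℕ := ((ν ⟨a + 1, h⟩ : Fin n) : ℕ) with hj
  have e1 := cnt_step ν ⟨a + 1, h⟩ j
  have e2 := cnt_step ν ⟨a + 1, h⟩ (j + 1)
  rw [if_pos hj.symm] at e1
  rw [if_neg (by omega)] at e2
  have := h1.2
  have := h2.2
  simp only at *
  omega

/-- two consecutive good letters stay good after the swap only if they commute -/
theorem good_swap_comm (ν : Fin N → Fin n) (a : ℕ) (h : a + 1 < N)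
    (h1 : GoodAt ν ⟨a + 1, h⟩) (h2 : GoodAt ν ⟨a, Nat.lt_of_succ_lt h⟩)
    (h3 : GoodAt (swapSeq a h ν) ⟨a + 1, h⟩) :
    comm (ν ⟨a, Nat.lt_of_succ_lt h⟩ : Fin n) (ν ⟨a + 1, h⟩ : Fin n) := by
  constructor
  · intro hv
    exact good_eq_false ν a h (Fin.ext hv) h1 h2
  · intro hadj
    unfold GoodAt at h1 h3
    rw [swapSeq_right] at h3
    have : cnt (swapSeq a h ν) (a + 1 + 1) = cnt ν (a + 1 + 1) := by
      funext j; exact cnt_swap _ _ _ _ _ (by omega)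
    simp only [this] at h3
    exact gd_adj hadj h3 h1

theorem gd_congr {c c' : ℕ → ℕ} {j : ℕ} (h0 : c j = c' j) (h1 : j ≠ 0 → c (j - 1) = c' (j - 1))
    (h2 : c (j + 1) = c' (j + 1)) : gd c j ↔ gd c' j := by
  unfold gd
  rw [h0, h2]
  by_cases hj : j = 0
  · simp [hj]
  · rw [h1 hj]

/-- commuting letters: goodness transfers -/
theorem good_of_comm (ν : Fin N → Fin n) (a : ℕ) (h : a + 1 < N)
    (hc : comm (ν ⟨a, Nat.lt_of_succ_lt h⟩ : Fin n) (ν ⟨a + 1, h⟩ : Fin n))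
    (h3 : GoodAt (swapSeq a h ν) ⟨a + 1, h⟩) : GoodAt ν ⟨a, Nat.lt_of_succ_lt h⟩ := by
  unfold GoodAt at *
  rw [swapSeq_right] at h3
  have : cnt (swapSeq a h ν) (a + 1 + 1) = cnt ν (a + 1 + 1) := by
    funext j; exact cnt_swap _ _ _ _ _ (by omega)
  simp only [this] at h3
  refine (gd_congr ?_ ?_ ?_).mp h3
  all_goals
    have e := cnt_step ν ⟨a + 1, h⟩
    simp only at e
    unfold comm adjL at hc
    try intro hj
    rw [e, if_neg (by omega), add_zero]

theorem good_inv (ν : Fin N → Fin n) (s : ℕ) (hs : s ≤ N) :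
    (∀ p : Fin N, s ≤ (p : ℕ) → GoodAt ν p) →
    ∀ j, cnt ν s (j + 1) ≤ cnt ν s j ∧ cnt ν s j ≤ cnt ν s (j + 1) + 1 := by
  induction hs using Nat.decreasingInduction with
  | self => intro _ j; simp [cnt_top]
  | of_succ s hs ih =>
    intro hg j
    have ih := ih (fun p hp => hg p (by omega))
    have hgs := hg ⟨s, hs⟩ (le_refl _)
    have e := cnt_step ν ⟨s, hs⟩
    unfold GoodAt gd at hgs
    simp only at e hgs
    set i : ℕ := ((ν ⟨s, hs⟩ : Fin n) : ℕ) with hi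
    have ih1 := ih j
    rw [e, e]
    by_cases h1 : i = j
    · subst h1
      rw [if_neg (by omega), if_pos rfl]; omega
    · rw [if_neg h1]
      by_cases h2 : i = j + 1
      · rw [if_pos h2]
        rw [h2] at hgs
        simp at hgs
        omega
      · rw [if_neg h2]; omega

theorem good_inv_le (ν : Fin N → Fin n) (s : ℕ) (hs : s ≤ N)
    (hg : ∀ p : Fin N, s ≤ (p : ℕ) → GoodAt ν p) (i d : ℕ) :
    cnt ν s (i + d) ≤ cnt ν s i ∧ cnt ν s i ≤ cnt ν s (i + d) + d := by
  induction d with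
  | zero => simp
  | succ d ih =>
    have := good_inv ν s hs hg (i + d)
    rw [← add_assoc]
    omega

/-- consecutive letters `i j i` -/
theorem good_iji (ν : Fin N → Fin n) (a : ℕ) (h : a + 2 < N)
    (hv : ν ⟨a, by omega⟩ = ν ⟨a + 2, h⟩)
    (h0 : GoodAt ν ⟨a, by omega⟩) (h2 : GoodAt ν ⟨a + 2, h⟩) :
    (ν ⟨a, by omega⟩ : ℕ) = 0 ∧ (ν ⟨a + 1, by omega⟩ : ℕ) = 1 := by
  unfold GoodAt gd at *
  rw [hv] at h0 ⊢
  have e1 := cnt_step ν ⟨a + 1, by omega⟩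
  have e2 := cnt_step ν ⟨a + 2, by omega⟩
  simp only [show a + 1 + 1 = a + 2 from rfl] at e1 e2 h0 h2
  set i : ℕ := ((ν ⟨a + 2, h⟩ : Fin n) : ℕ) with hi
  set j : ℕ := ((ν ⟨a + 1, by omega⟩ : Fin n) : ℕ) with hj
  have f1 := e1 i
  have f2 := e1 (i + 1)
  have f3 := e1 (i - 1)
  have g1 := e2 i
  have g2 := e2 (i + 1)
  have g3 := e2 (i - 1)
  rw [if_pos rfl] at g1
  rw [if_neg (by omega)] at g2
  by_cases hi0 : i = 0
  · split_ifs at f2 with q2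
    · exact ⟨hi0, by omega⟩
    · split_ifs at f1 <;> omega
  · rw [if_neg (by omega)] at g3
    exfalso
    split_ifs at f1 f2 f3 <;> omega

end Comb

section Tab

variable {n N : ℕ} {l : List ℕ}

theorem getD_strict (hdec : l.Pairwise (· > ·)) (i d : ℕ) (h : i + d < l.length) :
    l.getD (i + d) 0 + d ≤ l.getD i 0 := by
  induction d with
  | zero => simp
  | succ d ih =>
    have h1 := ih (by omega)
    have h2 : l.getD (i + (d + 1)) 0 < l.getD (i + d) 0 := by
      rw [List.getD_eq_getElem _ _ h, List.getD_eq_getElem _ _ (by omega)]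
      exact List.pairwise_iff_getElem.mp hdec _ _ _ _ (by omega)
    omega

theorem diag_down (hdec : l.Pairwise (· > ·)) {r c r' c' : ℕ} (h : (r', c') ∈ diagram l)
    (h1 : 1 ≤ r) (h2 : r ≤ r') (h3 : r ≤ c) (h4 : c ≤ c') : (r, c) ∈ diagram l := by
  obtain ⟨a1, a2, a3, a4⟩ := h
  simp only at a1 a2 a3 a4
  have := getD_strict hdec (r - 1) (r' - r) (by omega)
  rw [show r - 1 + (r' - r) = r' - 1 by omega] at this
  refine ⟨?_, ?_, ?_, ?_⟩ <;> simp only <;> omega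

theorem diag_facts {b : ℕ × ℕ} (h : b ∈ diagram l) : 1 ≤ b.1 ∧ b.1 ≤ b.2 := ⟨h.2.1, h.2.2.1⟩

theorem resFin_val (hn : 0 < n) (hle : ∀ x ∈ l, x ≤ n) {b : ℕ × ℕ} (h : b ∈ diagram l) :
    (resFin n hn b : ℕ) = b.2 - b.1 := by
  obtain ⟨a1, a2, a3, a4⟩ := h
  have h1 : l.getD (b.1 - 1) 0 ≤ n := by
    rw [List.getD_eq_getElem _ _ a1]
    exact hle _ (List.getElem_mem _)
  simp only [resFin]
  omega

theorem std_mem {f : Fin N → ℕ × ℕ} (hf : IsSYT l N f) (q : Fin N) : f q ∈ diagram l := by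
  rw [← hf.2.1]; exact ⟨q, rfl⟩

theorem std_order (hdec : l.Pairwise (· > ·)) {f : Fin N → ℕ × ℕ} (hf : IsSYT l N f)
    (a b : Fin N) (h1 : (f a).1 ≤ (f b).1) (h2 : (f a).2 ≤ (f b).2) (hne : a ≠ b) : a < b := by
  have ha := std_mem hf a
  have hb := std_mem hf b
  have hm : ((f a).1, (f b).2) ∈ diagram l :=
    diag_down hdec (r' := (f b).1) (c' := (f b).2) hb (diag_facts ha).1 h1
      (le_trans (diag_facts ha).2 h2) le_rfl
  rw [← hf.2.1] at hm
  obtain ⟨m, hm⟩ := hm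
  have e1 : (f m).1 = (f a).1 := by rw [hm]
  have e2 : (f m).2 = (f b).2 := by rw [hm]
  have l1 : a ≤ m := by
    rcases Nat.eq_or_lt_of_le h2 with h | h
    · apply le_of_eq
      apply hf.1
      exact Prod.ext e1.symm (by rw [e2, h])
    · exact le_of_lt (hf.2.2.1 a m e1.symm (by rw [e2]; exact h))
  have l2 : m ≤ b := by
    rcases Nat.eq_or_lt_of_le h1 with h | h
    · apply le_of_eq
      apply hf.1
      exact Prod.ext (by rw [e1, h]) e2
    · exact le_of_lt (hf.2.2.2 m b e2 (by rw [e1]; exact h))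
  exact lt_of_le_of_ne (le_trans l1 l2) hne

theorem resSeq_val (hn : 0 < n) (hle : ∀ x ∈ l, x ≤ n) {f : Fin N → ℕ × ℕ} (hf : IsSYT l N f)
    (p : Fin N) : (resSeq n hn f p : ℕ) = (f p.rev).2 - (f p.rev).1 :=
  resFin_val hn hle (std_mem hf _)

theorem cnt_std (hn : 0 < n) (hle : ∀ x ∈ l, x ≤ n)
    {f : Fin N → ℕ × ℕ} (hf : IsSYT l N f) (s j t : ℕ)
    (h1 : ∀ q : Fin N, (f q.rev).2 - (f q.rev).1 = j → (s ≤ (q : ℕ) ↔ (f q.rev).1 ≤ t))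
    (h2 : ∀ r, 1 ≤ r → r ≤ t → (r, r + j) ∈ diagram l) :
    cnt (resSeq n hn f) s j = t := by
  unfold cnt
  rw [show t = (Finset.Icc 1 t).card by simp]
  apply Finset.card_bij (fun q _ => (f q.rev).1)
  · intro q hq
    rw [Finset.mem_filter, resSeq_val hn hle hf] at hq
    rw [Finset.mem_Icc]
    exact ⟨(diag_facts (std_mem hf _)).1, (h1 q hq.2.2).mp hq.2.1⟩
  · intro q hq q' hq' heq
    rw [Finset.mem_filter, resSeq_val hn hle hf] at hq hq'
    have d1 := diag_facts (std_mem hf q.rev)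
    have d2 := diag_facts (std_mem hf q'.rev)
    have := hf.1 (a₁ := q.rev) (a₂ := q'.rev) (Prod.ext heq (by omega))
    exact Fin.rev_injective this
  · intro r hr
    rw [Finset.mem_Icc] at hr
    have := h2 r hr.1 hr.2
    rw [← hf.2.1] at this
    obtain ⟨q, hq⟩ := this
    have e : (f q).2 - (f q).1 = j := by rw [hq]; simp
    refine ⟨q.rev, ?_, ?_⟩
    · rw [Finset.mem_filter, resSeq_val hn hle hf, Fin.rev_rev]
      refine ⟨Finset.mem_univ _, ?_, e⟩
      rw [h1 q.rev (by rw [Fin.rev_rev]; exact e), Fin.rev_rev, hq]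
      exact hr.2
    · simp only [Fin.rev_rev]; rw [hq]

theorem std_later (hdec : l.Pairwise (· > ·)) {f : Fin N → ℕ × ℕ} (hf : IsSYT l N f)
    (p q : Fin N) (h1 : (f p.rev).1 ≤ (f q.rev).1) (h2 : (f p.rev).2 ≤ (f q.rev).2)
    (hne : p ≠ q) : (q : ℕ) < p := by
  have := std_order hdec hf p.rev q.rev h1 h2 (fun h => hne (Fin.rev_injective h))
  exact Fin.rev_lt_rev.mp this

theorem cnt_std_self (hdec : l.Pairwise (· > ·)) (hn : 0 < n) (hle : ∀ x ∈ l, x ≤ n)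
    {f : Fin N → ℕ × ℕ} (hf : IsSYT l N f) (p : Fin N) :
    cnt (resSeq n hn f) ((p : ℕ) + 1) (resSeq n hn f p) + 1 = (f p.rev).1 := by
  have hp := diag_facts (std_mem hf p.rev)
  have hm := std_mem hf p.rev
  rw [cnt_std hn hle hf _ _ ((f p.rev).1 - 1)]
  · omega
  · intro q hq
    rw [resSeq_val hn hle hf] at hq
    have hq' := diag_facts (std_mem hf q.rev)
    by_cases hpq : p = q
    · subst hpq; omega
    constructor
    · intro h
      by_contra hc
      have := std_later hdec hf p q (by omega) (by omega) hpq
      omega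
    · intro h
      exact std_later hdec hf q p (by omega) (by omega) (Ne.symm hpq)
  · intro r h1 h2
    rw [resSeq_val hn hle hf]
    exact diag_down hdec hm h1 (by omega) (by omega) (by omega)

theorem std_good (hdec : l.Pairwise (· > ·)) (hn : 0 < n) (hle : ∀ x ∈ l, x ≤ n)
    {f : Fin N → ℕ × ℕ} (hf : IsSYT l N f) (p : Fin N) : GoodAt (resSeq n hn f) p := by
  have hp := diag_facts (std_mem hf p.rev)
  have hm := std_mem hf p.rev
  have h0 := cnt_std_self hdec hn hle hf p
  have hv := resSeq_val hn hle hf p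
  unfold GoodAt gd
  constructor
  · by_cases hz : (resSeq n hn f p : ℕ) = 0
    · left; exact hz
    right
    rw [h0]
    apply cnt_std hn hle hf
    · intro q hq
      have hq' := diag_facts (std_mem hf q.rev)
      have hpq : p ≠ q := by
        rintro rfl
        omega
      constructor
      · intro h
        by_contra hc
        have := std_later hdec hf p q (by omega) (by omega) hpq
        omega
      · intro h
        exact std_later hdec hf q p (by omega) (by omega) (Ne.symm hpq)
    · intro r h1 h2
      exact diag_down hdec hm h1 (by omega) (by omega) (by omega)
  · rw [show cnt (resSeq n hn f) ((p : ℕ) + 1) (resSeq n hn f p) = (f p.rev).1 - 1 by omega]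
    apply cnt_std hn hle hf
    · intro q hq
      have hq' := diag_facts (std_mem hf q.rev)
      have hpq : p ≠ q := by
        rintro rfl
        omega
      constructor
      · intro h
        by_contra hc
        have := std_later hdec hf p q (by omega) (by omega) hpq
        omega
      · intro h
        exact std_later hdec hf q p (by omega) (by omega) (Ne.symm hpq)
    · intro r h1 h2
      exact diag_down hdec hm h1 (by omega) (by omega) (by omega)

/-- The tableau attached to a residue sequence. -/
def tabOf (ν : Fin N → Fin n) (q : Fin N) : ℕ × ℕ :=
  (cnt ν ((q.rev : ℕ) + 1) (ν q.rev) + 1, cnt ν ((q.rev : ℕ) + 1) (ν q.rev) + 1 + (ν q.rev : ℕ))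

theorem tabOf_res (hdec : l.Pairwise (· > ·)) (hn : 0 < n) (hle : ∀ x ∈ l, x ≤ n)
    {f : Fin N → ℕ × ℕ} (hf : IsSYT l N f) : tabOf (resSeq n hn f) = f := by
  funext q
  have h0 := cnt_std_self hdec hn hle hf q.rev
  have hv := resSeq_val hn hle hf q.rev
  rw [Fin.rev_rev] at h0 hv
  have hp := diag_facts (std_mem hf q)
  unfold tabOf
  rw [h0]
  exact Prod.ext rfl (by simp only; omega)

theorem res_inj (hdec : l.Pairwise (· > ·)) (hn : 0 < n) (hle : ∀ x ∈ l, x ≤ n)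
    {f g : Fin N → ℕ × ℕ} (hf : IsSYT l N f) (hg : IsSYT l N g)
    (h : resSeq n hn f = resSeq n hn g) : f = g := by
  rw [← tabOf_res hdec hn hle hf, ← tabOf_res hdec hn hle hg, h]

theorem swapEnt_rev (f : Fin N → ℕ × ℕ) (a : ℕ) (h : a + 1 < N) (p : Fin N) :
    swapEnt a h f p.rev = f (posSwap a h p).rev := by
  unfold swapEnt posSwap
  simp only [Function.comp]
  congr 1
  simp only [Equiv.swap_apply_def, Fin.rev_inj]
  split_ifs <;> rfl

theorem resSeq_swapEnt (hn : 0 < n) (f : Fin N → ℕ × ℕ) (a : ℕ) (h : a + 1 < N) :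
    resSeq n hn (swapEnt a h f) = swapSeq a h (resSeq n hn f) := by
  funext p
  simp only [resSeq, swapSeq, Function.comp, swapEnt_rev]

theorem swapEnt_swapEnt (f : Fin N → ℕ × ℕ) (a : ℕ) (h : a + 1 < N) :
    swapEnt a h (swapEnt a h f) = f := by
  funext q
  rw [← Fin.rev_rev q, swapEnt_rev, swapEnt_rev, posSwap_posSwap]

/-- If swapping destroys standardness, the two boxes are in the same row or column. -/
theorem swap_nonstd {f : Fin N → ℕ × ℕ} (hf : IsSYT l N f) (a : ℕ) (h : a + 1 < N)
    (hs : ¬ IsSYT l N (swapEnt a h f)) :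
    ((f (Fin.rev ⟨a, Nat.lt_of_succ_lt h⟩)).1 = (f (Fin.rev ⟨a + 1, h⟩)).1 ∧
      (f (Fin.rev ⟨a + 1, h⟩)).2 < (f (Fin.rev ⟨a, Nat.lt_of_succ_lt h⟩)).2) ∨
    ((f (Fin.rev ⟨a, Nat.lt_of_succ_lt h⟩)).2 = (f (Fin.rev ⟨a + 1, h⟩)).2 ∧
      (f (Fin.rev ⟨a + 1, h⟩)).1 < (f (Fin.rev ⟨a, Nat.lt_of_succ_lt h⟩)).1) := by
  by_contra hcon
  apply hs
  have key : ∀ x y : Fin N, (posSwap a h x) < (posSwap a h y) → y ≤ x →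
      y = ⟨a, Nat.lt_of_succ_lt h⟩ ∧ x = ⟨a + 1, h⟩ := by
    intro x y h1 h2
    rw [Fin.lt_def, posSwap_val, posSwap_val] at h1
    rw [Fin.le_def] at h2
    rw [Fin.ext_iff, Fin.ext_iff]
    simp only
    split_ifs at h1 <;> omega
  refine ⟨?_, ?_, ?_, ?_⟩
  · exact hf.1.comp (Equiv.injective _)
  · rw [← hf.2.1]
    exact (Equiv.surjective _).range_comp f
  · intro x y h1 h2
    rw [← Fin.rev_rev x, ← Fin.rev_rev y, swapEnt_rev, swapEnt_rev] at h1 h2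
    have h3 := hf.2.2.1 _ _ h1 h2
    rw [Fin.rev_lt_rev] at h3
    by_contra hc
    obtain ⟨e1, e2⟩ := key y.rev x.rev h3 (by rw [Fin.rev_le_rev]; exact not_lt.mp hc)
    apply hcon
    left
    rw [e1, e2] at h1 h2
    simp only [posSwap, Equiv.swap_apply_left, Equiv.swap_apply_right] at h1 h2
    omega
  · intro x y h1 h2
    rw [← Fin.rev_rev x, ← Fin.rev_rev y, swapEnt_rev, swapEnt_rev] at h1 h2
    have h3 := hf.2.2.2 _ _ h1 h2
    rw [Fin.rev_lt_rev] at h3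
    by_contra hc
    obtain ⟨e1, e2⟩ := key y.rev x.rev h3 (by rw [Fin.rev_le_rev]; exact not_lt.mp hc)
    apply hcon
    right
    rw [e1, e2] at h1 h2
    simp only [posSwap, Equiv.swap_apply_left, Equiv.swap_apply_right] at h1 h2
    omega

theorem swap_std_of_comm (hdec : l.Pairwise (· > ·)) (hn : 0 < n) (hle : ∀ x ∈ l, x ≤ n)
    {f : Fin N → ℕ × ℕ} (hf : IsSYT l N f) (a : ℕ) (h : a + 1 < N)
    (hc : comm (resSeq n hn f ⟨a, Nat.lt_of_succ_lt h⟩ : Fin n)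
      (resSeq n hn f ⟨a + 1, h⟩ : Fin n)) : IsSYT l N (swapEnt a h f) := by
  by_contra hs
  have h1 := swap_nonstd hf a h hs
  rw [resSeq_val hn hle hf, resSeq_val hn hle hf] at hc
  set A : Fin N := ⟨a, Nat.lt_of_succ_lt h⟩ with hA
  set B : Fin N := ⟨a + 1, h⟩ with hB
  have hAB : A ≠ B := by rw [hA, hB]; simp
  have dA := diag_facts (std_mem hf A.rev)
  have dB := diag_facts (std_mem hf B.rev)
  unfold comm adjL at hc
  have mid : ∀ r c, (r, c) ∈ diagram l → (f B.rev).1 ≤ r → (f B.rev).2 ≤ c →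
      r ≤ (f A.rev).1 → c ≤ (f A.rev).2 → (r, c) ≠ f B.rev → (r, c) ≠ f A.rev → False := by
    intro r c hm q1 q2 q3 q4 q5 q6
    rw [← hf.2.1] at hm
    obtain ⟨m, hm⟩ := hm
    have e1 : (f m.rev.rev).1 = r := by rw [Fin.rev_rev, hm]
    have e2 : (f m.rev.rev).2 = c := by rw [Fin.rev_rev, hm]
    have n1 : B ≠ m.rev := by
      intro hh; apply q5; rw [hh, Fin.rev_rev, hm]
    have n2 : m.rev ≠ A := by
      intro hh; apply q6; rw [← hh, Fin.rev_rev, hm]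
    have l1 := std_later hdec hf B m.rev (by omega) (by omega) n1
    have l2 := std_later hdec hf m.rev A (by omega) (by omega) n2
    rw [hA] at l2
    rw [hB] at l1
    simp only at l1 l2
    omega
  rcases h1 with ⟨h1, h2⟩ | ⟨h1, h2⟩
  · apply mid (f B.rev).1 ((f B.rev).2 + 1)
    · exact diag_down hdec (std_mem hf A.rev) dB.1 (by omega) (by omega) (by omega)
    · omega
    · omega
    · omega
    · omega
    · intro hh
      have := congrArg Prod.snd hh
      simp at this
    · intro hh
      have := congrArg Prod.snd hh
      simp only at this
      omega
  · apply mid ((f B.rev).1 + 1) (f B.rev).2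
    · exact diag_down hdec (std_mem hf A.rev) (by omega) (by omega) (by omega) (by omega)
    · omega
    · omega
    · omega
    · omega
    · intro hh
      have := congrArg Prod.fst hh
      simp at this
    · intro hh
      have := congrArg Prod.fst hh
      simp only at this
      omega

theorem swap_std_iff (hdec : l.Pairwise (· > ·)) (hn : 0 < n) (hle : ∀ x ∈ l, x ≤ n)
    {f : Fin N → ℕ × ℕ} (hf : IsSYT l N f) (a : ℕ) (h : a + 1 < N) :
    IsSYT l N (swapEnt a h f) ↔ comm (resSeq n hn f ⟨a, Nat.lt_of_succ_lt h⟩ : Fin n)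
      (resSeq n hn f ⟨a + 1, h⟩ : Fin n) := by
  constructor
  · intro hs
    apply good_swap_comm _ _ _ (std_good hdec hn hle hf _) (std_good hdec hn hle hf _)
    rw [← resSeq_swapEnt]
    exact std_good hdec hn hle hs _
  · exact swap_std_of_comm hdec hn hle hf a h

end Tab

section Tab2

variable {n N : ℕ} {l : List ℕ}

theorem mem_diagFinset (b : ℕ × ℕ) : b ∈ diagFinset l ↔ b ∈ diagram l := by
  unfold diagFinset diagram
  simp only [Finset.mem_biUnion, Finset.mem_range, Finset.mem_image, Finset.mem_Icc,
    Set.mem_ofPred_eq]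
  constructor
  · rintro ⟨i, hi, j, hj, rfl⟩
    simp only [Nat.add_sub_cancel]
    refine ⟨hi, ?_, ?_, ?_⟩ <;> omega
  · rintro ⟨h1, h2, h3, h4⟩
    refine ⟨b.1 - 1, h1, b.2, ⟨by omega, by omega⟩, ?_⟩
    exact Prod.ext (by simp only; omega) rfl

theorem cnt_lt_of (ν : Fin N → Fin n) {s : ℕ} {p : Fin N} (h : s ≤ (p : ℕ)) :
    cnt ν ((p : ℕ) + 1) (ν p) < cnt ν s (ν p) := by
  have h1 := cnt_step ν p (ν p)
  rw [if_pos rfl] at h1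
  have := cnt_anti ν (ν p : ℕ) h
  omega

theorem exists_pos (ν : Fin N → Fin n) (j t s : ℕ) (hs : s ≤ N) :
    t < cnt ν s j → ∃ p : Fin N, s ≤ (p : ℕ) ∧ (ν p : ℕ) = j ∧ cnt ν ((p : ℕ) + 1) j = t := by
  induction hs using Nat.decreasingInduction with
  | self => intro h; rw [cnt_top _ _ _ le_rfl] at h; omega
  | of_succ s hs ih =>
    intro h
    by_cases h1 : t < cnt ν (s + 1) j
    · obtain ⟨p, hp⟩ := ih h1
      exact ⟨p, by omega, hp.2⟩
    · have e := cnt_step ν ⟨s, hs⟩ j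
      simp only at e
      split_ifs at e with hv
      · exact ⟨⟨s, hs⟩, le_rfl, hv, by simp only; omega⟩
      · omega

theorem resSeq_tabOf (hn : 0 < n) (ν : Fin N → Fin n) : resSeq n hn (tabOf ν) = ν := by
  funext p
  unfold resSeq tabOf resFin
  apply Fin.ext
  simp only [Fin.rev_rev]
  have := (ν p).2
  omega

theorem tabOf_std (ν : Fin N → Fin n) (hg : ∀ p, GoodAt ν p)
    (hD : ∀ j t, t < cnt ν 0 j ↔ (t + 1, t + 1 + j) ∈ diagram l) : IsSYT l N (tabOf ν) := by
  have hle : ∀ p : Fin N, (p : ℕ) + 1 ≤ N := fun p => p.2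
  refine ⟨?_, ?_, ?_, ?_⟩
  · intro q q' h
    unfold tabOf at h
    rw [Prod.mk.injEq] at h
    obtain ⟨h1, h2⟩ := h
    have hv : (ν q.rev : ℕ) = ν q'.rev := by omega
    rw [hv] at h1
    apply Fin.rev_injective
    apply Fin.ext
    rcases lt_trichotomy (q.rev : ℕ) (q'.rev : ℕ) with h3 | h3 | h3
    · have := cnt_lt_of ν (s := (q.rev : ℕ) + 1) (p := q'.rev) h3
      omega
    · exact h3
    · have := cnt_lt_of ν (s := (q'.rev : ℕ) + 1) (p := q.rev) h3
      rw [hv] at this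
      omega
  · ext ⟨r, c⟩
    constructor
    · rintro ⟨q, hq⟩
      rw [← hq]
      unfold tabOf
      rw [← hD]
      exact cnt_lt_of ν (Nat.zero_le _)
    · intro h
      have d := diag_facts h
      simp only at d
      have h2 := (hD (c - r) (r - 1)).mpr (by
        rw [show r - 1 + 1 = r by omega, show r + (c - r) = c by omega]; exact h)
      obtain ⟨p, _, hp1, hp2⟩ := exists_pos ν _ _ 0 (Nat.zero_le _) h2
      refine ⟨p.rev, ?_⟩
      unfold tabOf
      rw [Fin.rev_rev, hp1, hp2]
      exact Prod.ext (by simp only; omega) (by simp only; omega)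
  · intro a b h1 h2
    unfold tabOf at h1 h2
    simp only at h1 h2
    by_contra hc
    have hpp : (a.rev : ℕ) ≤ b.rev := by
      have := Fin.rev_le_rev.mpr (not_lt.mp hc)
      exact this
    have hgb := hg b.rev
    unfold GoodAt gd at hgb
    have hlt : (ν a.rev : ℕ) < ν b.rev := by omega
    have h3 := good_inv_le ν ((b.rev : ℕ) + 1) (hle _) (fun p _ => hg p) (ν a.rev)
      ((ν b.rev : ℕ) - 1 - ν a.rev)
    rw [show (ν a.rev : ℕ) + ((ν b.rev : ℕ) - 1 - ν a.rev) = (ν b.rev : ℕ) - 1 by omega] at h3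
    have h4 := cnt_anti ν (ν a.rev : ℕ) (show (a.rev : ℕ) + 1 ≤ (b.rev : ℕ) + 1 by omega)
    omega
  · intro a b h1 h2
    unfold tabOf at h1 h2
    simp only at h1 h2
    by_contra hc
    have hpp : (a.rev : ℕ) ≤ b.rev := by
      have := Fin.rev_le_rev.mpr (not_lt.mp hc)
      exact this
    have hgb := hg b.rev
    unfold GoodAt gd at hgb
    have hlt : (ν b.rev : ℕ) < ν a.rev := by omega
    have h3 := good_inv_le ν ((b.rev : ℕ) + 1) (hle _) (fun p _ => hg p) ((ν b.rev : ℕ) + 1)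
      ((ν a.rev : ℕ) - 1 - ν b.rev)
    rw [show (ν b.rev : ℕ) + 1 + ((ν a.rev : ℕ) - 1 - ν b.rev) = (ν a.rev : ℕ) by omega] at h3
    have h4 := cnt_anti ν (ν a.rev : ℕ) (show (a.rev : ℕ) + 1 ≤ (b.rev : ℕ) + 1 by omega)
    omega

theorem sum_fin_ite (F : ℕ → ℤ) (m : ℕ) :
    (∑ i : Fin n, if (i : ℕ) = m then F i else 0) = if m < n then F m else 0 := by
  rw [Fin.sum_univ_eq_sum_range (fun i => if i = m then F i else 0) n]
  rw [Finset.sum_ite_eq']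
  simp

/-- coefficients of (twice) a fundamental coweight -/
def cow (n j i : ℕ) : ℤ := if i = 0 then (n : ℤ) - j else 2 * ((n : ℤ) - (max i j : ℕ))

theorem cow_pair (j : ℕ) (hj : j < n) (i' : Fin n) :
    ∑ i : Fin n, cow n j i * AB n i i' = if (i' : ℕ) = j then 2 else 0 := by
  have hA : ∀ i : Fin n, cow n j i * AB n i i' =
      (if (i : ℕ) = i' then (fun m => 2 * cow n j m) i else 0) +
      (if (i : ℕ) = (i' : ℕ) - 1 then
        (fun m => if (i' : ℕ) = 0 then 0 else if (i' : ℕ) = 1 then -2 * cow n j m else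
          - cow n j m) i else 0) +
      (if (i : ℕ) = (i' : ℕ) + 1 then (fun m => - cow n j m) i else 0) := by
    intro i
    unfold AB
    have hi := i.2
    have hi' := i'.2
    by_cases h0 : i = i'
    · subst h0
      simp only [if_true]
      rw [if_neg (show ¬ ((i : ℕ) = i + 1) by omega)]
      split_ifs <;> first | omega | ring
    · have h1 : ¬ (i : ℕ) = i' := fun h => h0 (Fin.ext h)
      simp only [h0, h1, if_false]
      split_ifs <;> first | omega | ring
  rw [Finset.sum_congr rfl (fun i _ => hA i), Finset.sum_add_distrib, Finset.sum_add_distrib,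
    sum_fin_ite (fun m => 2 * cow n j m), sum_fin_ite (fun m => - cow n j m),
    sum_fin_ite (fun m => if (i' : ℕ) = 0 then 0 else if (i' : ℕ) = 1 then -2 * cow n j m else
          - cow n j m)]
  have hi' := i'.2
  unfold cow
  simp only [hi', if_true]
  rw [if_pos (show (i' : ℕ) - 1 < n by omega)]
  split_ifs <;> first | contradiction | omega

theorem cow_sum {ι : Type} (s : Finset ι) (g : ι → Fin n) (j : ℕ) (hj : j < n) :
    ∑ i : Fin n, cow n j i * (∑ b ∈ s, αcol (AB n) (g b)) i =
      2 * ((s.filter fun b => (g b : ℕ) = j).card : ℤ) := by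
  simp only [Finset.sum_apply, Finset.mul_sum, αcol]
  rw [Finset.sum_comm]
  rw [Finset.sum_congr rfl (fun b _ => cow_pair j hj (g b))]
  rw [Finset.card_filter, Nat.cast_sum, Finset.mul_sum]
  apply Finset.sum_congr rfl
  intro b _
  split_ifs <;> simp

theorem Iβ_iff (hn : 0 < n) (ν : Fin N → Fin n) :
    ν ∈ Iβ (AB n) (Pi.single ⟨0, hn⟩ 1) (wtP n hn l) N ↔
      ∑ p : Fin N, αcol (AB n) (ν p) = ∑ b ∈ diagFinset l, αcol (AB n) (resFin n hn b) := by
  unfold Iβ wtP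
  rw [Set.mem_ofPred_eq]
  have : (fun i => (Pi.single ⟨0, hn⟩ 1 : Fin n → ℤ) i - ((Pi.single ⟨0, hn⟩ 1 : Fin n → ℤ) -
      ∑ b ∈ diagFinset l, αcol (AB n) (resFin n hn b)) i) =
      ∑ b ∈ diagFinset l, αcol (AB n) (resFin n hn b) := by
    funext i
    simp only [Pi.sub_apply]
    ring
  rw [this]

theorem cnt_of_Iβ (hdec : l.Pairwise (· > ·)) (hn : 0 < n) (hle : ∀ x ∈ l, x ≤ n)
    (ν : Fin N → Fin n)
    (h : ν ∈ Iβ (AB n) (Pi.single ⟨0, hn⟩ 1) (wtP n hn l) N) (j t : ℕ) :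
    t < cnt ν 0 j ↔ (t + 1, t + 1 + j) ∈ diagram l := by
  rw [Iβ_iff] at h
  by_cases hj : j < n
  · have h1 := cow_sum Finset.univ ν j hj
    have h2 := cow_sum (diagFinset l) (resFin n hn) j hj
    rw [← h, h1] at h2
    have h3 : cnt ν 0 j = ((diagFinset l).filter fun b => (resFin n hn b : ℕ) = j).card := by
      unfold cnt
      simp only [Nat.zero_le, true_and]
      have : (2 : ℤ) ≠ 0 := by norm_num
      exact_mod_cast mul_left_cancel₀ this h2
    rw [h3]
    constructor
    · intro ht
      by_contra hc
      have : ((diagFinset l).filter fun b => (resFin n hn b : ℕ) = j).card ≤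
          (Finset.Icc 1 t).card := by
        apply Finset.card_le_card_of_injOn (fun b => b.1)
        · intro b hb
          rw [Finset.mem_coe, Finset.mem_filter, mem_diagFinset] at hb
          have e := resFin_val hn hle hb.1
          have d := diag_facts hb.1
          rw [Finset.mem_coe, Finset.mem_Icc]
          refine ⟨d.1, ?_⟩
          by_contra hlt
          simp only at hlt
          exact hc (diag_down hdec hb.1 (by omega) (by omega) (by omega) (by omega))
        · intro b hb b' hb' hbb
          rw [Finset.mem_coe, Finset.mem_filter, mem_diagFinset] at hb hb'
          have e := resFin_val hn hle hb.1
          have d := diag_facts hb.1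
          have e' := resFin_val hn hle hb'.1
          have d' := diag_facts hb'.1
          simp only at hbb
          exact Prod.ext hbb (by omega)
      rw [Nat.card_Icc] at this
      omega
    · intro hm
      have : (Finset.range (t + 1)).card ≤
          ((diagFinset l).filter fun b => (resFin n hn b : ℕ) = j).card := by
        apply Finset.card_le_card_of_injOn (fun r => (r + 1, r + 1 + j))
        · intro r hr
          rw [Finset.mem_coe, Finset.mem_range] at hr
          have hm' : (r + 1, r + 1 + j) ∈ diagram l :=
            diag_down hdec hm (by omega) (by omega) (by omega) (by omega)
          rw [Finset.mem_coe, Finset.mem_filter, mem_diagFinset]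
          refine ⟨hm', ?_⟩
          rw [resFin_val hn hle hm']
          simp
        · intro b _ b' _ hbb
          simp only [Prod.mk.injEq] at hbb
          omega
      rw [Finset.card_range] at this
      omega
  · rw [cnt_big _ _ _ (by omega)]
    constructor
    · omega
    · intro hm
      have := resFin_val hn hle hm
      have h2 := (resFin n hn (t + 1, t + 1 + j)).2
      simp only at this
      omega

theorem std_Iβ (hn : 0 < n) {f : Fin N → ℕ × ℕ} (hf : IsSYT l N f) :
    resSeq n hn f ∈ Iβ (AB n) (Pi.single ⟨0, hn⟩ 1) (wtP n hn l) N := by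
  rw [Iβ_iff]
  apply Finset.sum_bij (fun p _ => f p.rev)
  · intro p _
    rw [mem_diagFinset]; exact std_mem hf _
  · intro p _ q _ h
    exact Fin.rev_injective (hf.1 h)
  · intro b hb
    rw [mem_diagFinset, ← hf.2.1] at hb
    obtain ⟨q, hq⟩ := hb
    exact ⟨q.rev, Finset.mem_univ _, by rw [Fin.rev_rev]; exact hq⟩
  · intro p _
    rfl

/-- A good sequence in `I^β` is the residue sequence of a standard tableau. -/
theorem exists_std (hdec : l.Pairwise (· > ·)) (hn : 0 < n) (hle : ∀ x ∈ l, x ≤ n)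
    (ν : Fin N → Fin n)
    (h : ν ∈ Iβ (AB n) (Pi.single ⟨0, hn⟩ 1) (wtP n hn l) N) (hg : ∀ p, GoodAt ν p) :
    ∃ f, IsSYT l N f ∧ resSeq n hn f = ν :=
  ⟨tabOf ν, tabOf_std ν hg (cnt_of_Iβ hdec hn hle ν h), resSeq_tabOf hn ν⟩

end Tab2

section Poly

variable {k : Type} [Field k] {A : Type} [Ring A] [Algebra k A]

theorem eval2_of_support (p : MvPolynomial (Fin 2) k) (s : Finset (Fin 2 →₀ ℕ))
    (hs : p.support ⊆ s) (a b : A) :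
    eval2 k p a b = ∑ d ∈ s, algebraMap k A (MvPolynomial.coeff d p) * (a ^ d 0 * b ^ d 1) := by
  unfold eval2
  apply Finset.sum_subset hs
  intro d _ hd
  rw [MvPolynomial.notMem_support_iff] at hd
  rw [hd, map_zero, zero_mul]

theorem eval2_add (p q : MvPolynomial (Fin 2) k) (a b : A) :
    eval2 k (p + q) a b = eval2 k p a b + eval2 k q a b := by
  rw [eval2_of_support (p + q) (p.support ∪ q.support) MvPolynomial.support_add,
    eval2_of_support p (p.support ∪ q.support) Finset.subset_union_left,
    eval2_of_support q (p.support ∪ q.support) Finset.subset_union_right,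
    ← Finset.sum_add_distrib]
  apply Finset.sum_congr rfl
  intro d _
  rw [MvPolynomial.coeff_add, map_add, add_mul]

theorem eval2_monomial (d : Fin 2 →₀ ℕ) (t : k) (a b : A) :
    eval2 k (MvPolynomial.monomial d t) a b = algebraMap k A t * (a ^ d 0 * b ^ d 1) := by
  rw [eval2_of_support _ {d} MvPolynomial.support_monomial_subset]
  simp

theorem eval2_one (a b : A) : eval2 k 1 a b = 1 := by
  have := eval2_monomial (k := k) 0 1 a b
  simpa using this

theorem eval2_zero (a b : A) : eval2 k 0 a b = 0 := by
  simp [eval2]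

theorem eval3_of_support (p : MvPolynomial (Fin 3) k) (s : Finset (Fin 3 →₀ ℕ))
    (hs : p.support ⊆ s) (a b c : A) :
    eval3 k p a b c = ∑ d ∈ s, algebraMap k A (MvPolynomial.coeff d p) *
      (a ^ d 0 * b ^ d 1 * c ^ d 2) := by
  unfold eval3
  apply Finset.sum_subset hs
  intro d _ hd
  rw [MvPolynomial.notMem_support_iff] at hd
  rw [hd, map_zero, zero_mul]

theorem eval3_add (p q : MvPolynomial (Fin 3) k) (a b c : A) :
    eval3 k (p + q) a b c = eval3 k p a b c + eval3 k q a b c := by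
  rw [eval3_of_support (p + q) (p.support ∪ q.support) MvPolynomial.support_add,
    eval3_of_support p (p.support ∪ q.support) Finset.subset_union_left,
    eval3_of_support q (p.support ∪ q.support) Finset.subset_union_right,
    ← Finset.sum_add_distrib]
  apply Finset.sum_congr rfl
  intro d _
  rw [MvPolynomial.coeff_add, map_add, add_mul]

theorem eval3_monomial (d : Fin 3 →₀ ℕ) (t : k) (a b c : A) :
    eval3 k (MvPolynomial.monomial d t) a b c =
      algebraMap k A t * (a ^ d 0 * b ^ d 1 * c ^ d 2) := by
  rw [eval3_of_support _ {d} MvPolynomial.support_monomial_subset]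
  simp

theorem eval3_zero (a b c : A) : eval3 k 0 a b c = 0 := by
  simp [eval3]

theorem Qbar_eq (p : MvPolynomial (Fin 2) k) (q : MvPolynomial (Fin 3) k)
    (h : MvPolynomial.rename (fun i : Fin 2 => if i = 0 then (0 : Fin 3) else 1) p -
          MvPolynomial.rename (fun i : Fin 2 => if i = 0 then (2 : Fin 3) else 1) p =
        (MvPolynomial.X 0 - MvPolynomial.X 2) * q) : Qbar k p = q := by
  unfold Qbar
  rw [h, map_mul, map_sub, MvPolynomial.finSuccEquiv_X_zero,
    show (2 : Fin 3) = Fin.succ 1 from rfl, MvPolynomial.finSuccEquiv_X_succ,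
    Polynomial.mul_divByMonic_cancel_left _ (Polynomial.monic_X_sub_C _),
    AlgEquiv.symm_apply_apply]

open MvPolynomial in
theorem two_terms (p : MvPolynomial (Fin 2) k) (a s : ℕ) (ha : 0 < a)
    (h : ∀ d ∈ p.support, (d 0 = a ∧ d 1 = 0) ∨ (d 0 = 0 ∧ d 1 = s)) :
    p = monomial (Finsupp.single 0 a) (coeff (Finsupp.single 0 a) p) +
      monomial (Finsupp.single 1 s) (coeff (Finsupp.single 1 s) p) := by
  have hne : Finsupp.single (0 : Fin 2) a ≠ Finsupp.single 1 s := by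
    intro hh
    have := DFunLike.congr_fun hh 0
    simp at this
    omega
  ext d
  rw [coeff_add, coeff_monomial, coeff_monomial]
  by_cases hd : d ∈ p.support
  · rcases h d hd with h1 | h1
    · have : d = Finsupp.single 0 a := by
        ext i; fin_cases i <;> simp [h1]
      subst this
      rw [if_pos rfl, if_neg hne.symm, add_zero]
    · have : d = Finsupp.single 1 s := by
        ext i; fin_cases i <;> simp [h1]
      subst this
      rw [if_pos rfl, if_neg hne, zero_add]
  · rw [notMem_support_iff] at hd
    split_ifs with h1 h2 h2
    · exact absurd (h1.trans h2.symm) hne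
    · rw [h1, hd]; simp
    · rw [h2, hd]; simp
    · rw [hd]; simp

section Adm

variable {n : ℕ} {Q : Fin n → Fin n → MvPolynomial (Fin 2) k}

theorem AB_comm {i j : Fin n} (h : comm (i : ℕ) j) : AB n i j = 0 := by
  unfold comm adjL at h
  unfold AB
  rw [if_neg (fun hh => h.1 (by rw [hh])), if_neg (by omega), if_neg (by omega)]

theorem AB_adj {i j : Fin n} (h : adjL (i : ℕ) j) :
    AB n i j = if (i : ℕ) = 0 then -2 else -1 := by
  unfold adjL at h
  unfold AB
  rw [if_neg (fun hh => by rw [hh] at h; omega)]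
  split_ifs <;> omega

theorem Q_comm (hQ : QAdmissible k (AB n) (dB n) Q) {i j : Fin n} (h : comm (i : ℕ) j) :
    Q i j = 1 := by
  apply hQ.2.2.1 i j (fun hh => h.1 (by rw [hh]))
  rw [AB_comm h, mul_zero]

open MvPolynomial in
theorem Q_adj (hQ : QAdmissible k (AB n) (dB n) Q) {i j : Fin n} (h : adjL (i : ℕ) j) :
    ∃ (t t' : k) (s : ℕ), t ≠ 0 ∧
      Q i j = monomial (Finsupp.single 0 (if (i : ℕ) = 0 then 2 else 1)) t +
        monomial (Finsupp.single 1 (s + 1)) t' := by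
  have hne : i ≠ j := by
    rintro rfl
    unfold adjL at h; omega
  have h4 := hQ.2.2.2.1 i j hne
  have h5 := hQ.2.2.2.2 i j hne
  rw [AB_adj h] at h4 h5
  have e : (-(if (i : ℕ) = 0 then (-2 : ℤ) else -1)).toNat = if (i : ℕ) = 0 then 2 else 1 := by
    split_ifs <;> rfl
  rw [e] at h5
  refine ⟨_, coeff (Finsupp.single 1 ((if (j : ℕ) = 0 then 1 else 0) + 1)) (Q i j),
    if (j : ℕ) = 0 then 1 else 0, h5, two_terms _ _ _ (by split_ifs <;> omega) ?_⟩
  intro d hd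
  have := h4 d hd
  unfold dB at this
  unfold adjL at h
  split_ifs at this ⊢ <;> omega

theorem ev2_adj (hQ : QAdmissible k (AB n) (dB n) Q) {i j : Fin n} (h : adjL (i : ℕ) j)
    (x y : A) :
    ∃ (t t' : k) (s : ℕ), t ≠ 0 ∧
      eval2 k (Q i j) x y = algebraMap k A t * x ^ (if (i : ℕ) = 0 then 2 else 1) +
        algebraMap k A t' * y ^ (s + 1) := by
  obtain ⟨t, t', s, ht, he⟩ := Q_adj hQ h
  refine ⟨t, t', s, ht, ?_⟩
  rw [he, eval2_add, eval2_monomial, eval2_monomial]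
  simp

theorem ev3_comm (hQ : QAdmissible k (AB n) (dB n) Q) {i j : Fin n} (h : comm (i : ℕ) j)
    (x y z : A) : eval3 k (Qbar k (Q i j)) x y z = 0 := by
  rw [Q_comm hQ h, Qbar_eq 1 0 (by simp), eval3_zero]

open MvPolynomial in
theorem ev3_adj (hQ : QAdmissible k (AB n) (dB n) Q) {i j : Fin n} (h : adjL (i : ℕ) j)
    (hi : (i : ℕ) ≠ 0) (x y z : A) :
    ∃ t : k, t ≠ 0 ∧ eval3 k (Qbar k (Q i j)) x y z = algebraMap k A t := by
  obtain ⟨t, t', s, ht, he⟩ := Q_adj hQ h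
  rw [if_neg hi] at he
  refine ⟨t, ht, ?_⟩
  rw [Qbar_eq (Q i j) (monomial 0 t)]
  · rw [eval3_monomial]; simp
  · rw [he, map_add, map_add, rename_monomial, rename_monomial, rename_monomial, rename_monomial]
    simp only [Finsupp.mapDomain_single]
    simp only [if_true, show (1 : Fin 2) ≠ 0 by decide, if_false]
    rw [← C_mul_X_pow_eq_monomial, ← C_mul_X_pow_eq_monomial, ← C_mul_X_pow_eq_monomial,
      show monomial 0 t = C t from rfl]
    ring

open MvPolynomial in
theorem ev3_zero (hQ : QAdmissible k (AB n) (dB n) Q) {i j : Fin n} (h : adjL (i : ℕ) j)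
    (hi : (i : ℕ) = 0) (x y z : A) :
    ∃ t : k, t ≠ 0 ∧ eval3 k (Qbar k (Q i j)) x y z = algebraMap k A t * (x + z) := by
  obtain ⟨t, t', s, ht, he⟩ := Q_adj hQ h
  rw [if_pos hi] at he
  refine ⟨t, ht, ?_⟩
  rw [Qbar_eq (Q i j) (monomial (Finsupp.single 0 1) t + monomial (Finsupp.single 2 1) t)]
  · rw [eval3_add, eval3_monomial, eval3_monomial]
    simp [mul_add]
  · rw [he, map_add, map_add, rename_monomial, rename_monomial, rename_monomial, rename_monomial]
    simp only [Finsupp.mapDomain_single]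
    simp only [if_true, show (1 : Fin 2) ≠ 0 by decide, if_false]
    rw [← C_mul_X_pow_eq_monomial, ← C_mul_X_pow_eq_monomial, ← C_mul_X_pow_eq_monomial,
      ← C_mul_X_pow_eq_monomial, ← C_mul_X_pow_eq_monomial]
    ring

end Adm

end Poly

section Vanish

/-- The relations of the cyclotomic quiver Hecke algebra, for elements of an algebra. -/
structure Rels (k : Type) [Field k] {A : Type} [Ring A] [Algebra k A] {n N : ℕ}
    (Q : Fin n → Fin n → MvPolynomial (Fin 2) k) (S : Set (Fin N → Fin n))
    (E : (Fin N → Fin n) → A) (X : Fin N → A) (T : (j : ℕ) → j + 1 < N → A) : Prop where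
  orth : ∀ ν ν', ν ≠ ν' → E ν * E ν' = 0
  idem : ∀ ν, E ν * E ν = E ν
  sum : ∑ ν, E ν = 1
  out : ∀ ν, ν ∉ S → E ν = 0
  xx : ∀ p q, X p * X q = X q * X p
  xe : ∀ p ν, X p * E ν = E ν * X p
  te : ∀ j h ν, T j h * E ν = E (swapSeq j h ν) * T j h
  tt : ∀ a ha b hb, (a + 1 < b ∨ b + 1 < a) → T a ha * T b hb = T b hb * T a ha
  tsq : ∀ j h ν, T j h * T j h * E ν =
    eval2 k (Q (ν ⟨j, Nat.lt_of_succ_lt h⟩) (ν ⟨j + 1, h⟩))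
      (X ⟨j, Nat.lt_of_succ_lt h⟩) (X ⟨j + 1, h⟩) * E ν
  txr : ∀ j h ν, ν ⟨j, Nat.lt_of_succ_lt h⟩ = ν ⟨j + 1, h⟩ →
    T j h * X ⟨j + 1, h⟩ * E ν = X ⟨j, Nat.lt_of_succ_lt h⟩ * T j h * E ν + E ν
  txc : ∀ j h ν (p : Fin N), (ν ⟨j, Nat.lt_of_succ_lt h⟩ ≠ ν ⟨j + 1, h⟩ ∨ ((p : ℕ) ≠ j ∧ (p : ℕ) ≠ j + 1)) →
    T j h * X p * E ν = X (posSwap j h p) * T j h * E ν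
  bne : ∀ j (h1 : j + 1 < N) (h2 : j + 2 < N) ν, ν ⟨j, Nat.lt_of_succ_lt h1⟩ ≠ ν ⟨j + 2, h2⟩ →
    T (j + 1) h2 * T j h1 * T (j + 1) h2 * E ν = T j h1 * T (j + 1) h2 * T j h1 * E ν
  beq : ∀ j (h1 : j + 1 < N) (h2 : j + 2 < N) ν, ν ⟨j, Nat.lt_of_succ_lt h1⟩ = ν ⟨j + 2, h2⟩ →
    T (j + 1) h2 * T j h1 * T (j + 1) h2 * E ν = T j h1 * T (j + 1) h2 * T j h1 * E ν +
      eval3 k (Qbar k (Q (ν ⟨j, Nat.lt_of_succ_lt h1⟩) (ν ⟨j + 1, h1⟩)))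
        (X ⟨j, Nat.lt_of_succ_lt h1⟩) (X ⟨j + 1, h1⟩) (X ⟨j + 2, h2⟩) * E ν
  cyc0 : ∀ ν (p : Fin N), (p : ℕ) + 1 = N → (ν p : ℕ) = 0 → X p * E ν = 0
  cyc1 : ∀ ν (p : Fin N), (p : ℕ) + 1 = N → (ν p : ℕ) ≠ 0 → E ν = 0

theorem map_eval2 {k : Type} [Field k] {A B : Type} [Ring A] [Algebra k A] [Ring B] [Algebra k B]
    (φ : A →ₐ[k] B) (p : MvPolynomial (Fin 2) k) (a b : A) :
    φ (eval2 k p a b) = eval2 k p (φ a) (φ b) := by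
  simp [eval2, map_sum]

theorem map_eval3 {k : Type} [Field k] {A B : Type} [Ring A] [Algebra k A] [Ring B] [Algebra k B]
    (φ : A →ₐ[k] B) (p : MvPolynomial (Fin 3) k) (a b c : A) :
    φ (eval3 k p a b c) = eval3 k p (φ a) (φ b) (φ c) := by
  simp [eval3, map_sum]

theorem rels_of_hom {k : Type} [Field k] {A : Type} [Ring A] [Algebra k A] {n N : ℕ}
    (hn : 0 < n)
    (Q : Fin n → Fin n → MvPolynomial (Fin 2) k) (S : Set (Fin N → Fin n))
    (φ : FA k n N →ₐ[k] A)
    (hφ : ∀ a b, CRel k Q S (Pi.single ⟨0, hn⟩ 1) a b → φ a = φ b) :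
    Rels k Q S (fun ν => φ (Eg k ν)) (fun p => φ (Xg k p)) (fun j h => φ (Tg k j h)) where
  orth ν ν' h := by simpa using hφ _ _ (Or.inl (Rel.e_orth ν ν' h))
  idem ν := by simpa using hφ _ _ (Or.inl (Rel.e_idem ν))
  sum := by simpa using hφ _ _ (Or.inl (Rel.e_sum))
  out ν h := by simpa using hφ _ _ (Or.inl (Rel.e_out ν h))
  xx p q := by simpa using hφ _ _ (Or.inl (Rel.xx p q))
  xe p ν := by simpa using hφ _ _ (Or.inl (Rel.xe p ν))
  te j h ν := by simpa using hφ _ _ (Or.inl (Rel.te j h ν))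
  tt a ha b hb hab := by simpa using hφ _ _ (Or.inl (Rel.tt a ha b hb hab))
  tsq j h ν := by simpa [map_eval2] using hφ _ _ (Or.inl (Rel.tsq j h ν))
  txr j h ν hv := by simpa using hφ _ _ (Or.inl (Rel.tx_right j h ν hv))
  txc j h ν p hv := by simpa using hφ _ _ (Or.inl (Rel.tx_comm j h ν p hv))
  bne j h1 h2 ν hv := by simpa using hφ _ _ (Or.inl (Rel.braid_ne j h1 h2 ν hv))
  beq j h1 h2 ν hv := by simpa [map_eval3] using hφ _ _ (Or.inl (Rel.braid_eq j h1 h2 ν hv))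
  cyc0 ν p hp h0 := by
    by_cases hS : ν ∈ S
    · have := hφ _ _ (Or.inr (CycRel.cyc ν hS p hp))
      have e : ν p = ⟨0, hn⟩ := Fin.ext h0
      rw [e] at this
      simpa using this
    · have := hφ _ _ (Or.inl (Rel.e_out ν hS))
      rw [map_zero] at this
      simp [this]
  cyc1 ν p hp h0 := by
    by_cases hS : ν ∈ S
    · have := hφ _ _ (Or.inr (CycRel.cyc ν hS p hp))
      have e : ν p ≠ ⟨0, hn⟩ := fun hh => h0 (by rw [hh])
      rw [Pi.single_eq_of_ne e] at this
      simpa using this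
    · have := hφ _ _ (Or.inl (Rel.e_out ν hS))
      rw [map_zero] at this
      simp [this]

variable {k : Type} [Field k] {A : Type} [Ring A] [Algebra k A] {n N : ℕ}
  {Q : Fin n → Fin n → MvPolynomial (Fin 2) k} {S : Set (Fin N → Fin n)}
  {E : (Fin N → Fin n) → A} {X : Fin N → A} {T : (j : ℕ) → j + 1 < N → A}

/-- The inductive vanishing property. -/
def Van (E : (Fin N → Fin n) → A) (X : Fin N → A) (s : ℕ) : Prop :=
  ∀ ν, ((∃ p : Fin N, s ≤ (p : ℕ) ∧ ¬ GoodAt ν p) → E ν = 0) ∧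
    ∀ p : Fin N, s ≤ (p : ℕ) → X p * E ν = 0

theorem comm_sq (hQ : QAdmissible k (AB n) (dB n) Q) (R : Rels k Q S E X T)
    (a : ℕ) (h : a + 1 < N) (ν : Fin N → Fin n)
    (hc : comm (ν ⟨a, Nat.lt_of_succ_lt h⟩ : ℕ) (ν ⟨a + 1, h⟩)) :
    T a h * T a h * E ν = E ν := by
  rw [R.tsq, Q_comm hQ hc, eval2_one, one_mul]

theorem comm_conj (hQ : QAdmissible k (AB n) (dB n) Q) (R : Rels k Q S E X T)
    (a : ℕ) (h : a + 1 < N) (ν : Fin N → Fin n)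
    (hc : comm (ν ⟨a, Nat.lt_of_succ_lt h⟩ : ℕ) (ν ⟨a + 1, h⟩)) :
    T a h * E (swapSeq a h ν) * T a h = E ν := by
  rw [mul_assoc, ← R.te, ← mul_assoc, comm_sq hQ R a h ν hc]

theorem comm_conjX (hQ : QAdmissible k (AB n) (dB n) Q) (R : Rels k Q S E X T)
    (a : ℕ) (h : a + 1 < N) (ν : Fin N → Fin n)
    (hc : comm (ν ⟨a, Nat.lt_of_succ_lt h⟩ : ℕ) (ν ⟨a + 1, h⟩)) (p : Fin N) :
    T a h * (X (posSwap a h p) * E (swapSeq a h ν)) * T a h = X p * E ν := by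
  have hne : ν ⟨a, Nat.lt_of_succ_lt h⟩ ≠ ν ⟨a + 1, h⟩ := fun hh => hc.1 (by rw [hh])
  have h1 : T a h * X (posSwap a h p) * E (swapSeq a h ν) =
      X p * T a h * E (swapSeq a h ν) := by
    rw [R.txc, posSwap_posSwap]
    left
    rw [swapSeq_left, swapSeq_right]
    exact hne.symm
  rw [← mul_assoc, h1, mul_assoc (X p), mul_assoc (X p), comm_conj hQ R a h ν hc]

/-- Swapping two adjacent letters at a good position breaks goodness. -/
theorem swap_bad (R : Rels k Q S E X T) (s : ℕ) (hV : Van E X (s + 1))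
    (a : ℕ) (h : a + 1 < N) (hs : s ≤ a)
    (ν : Fin N → Fin n)
    (hadj : adjL (ν ⟨a, Nat.lt_of_succ_lt h⟩ : ℕ) (ν ⟨a + 1, h⟩))
    (hg : GoodAt ν ⟨a + 1, h⟩) : E (swapSeq a h ν) = 0 := by
  apply (hV _).1
  refine ⟨⟨a + 1, h⟩, by simp; omega, ?_⟩
  intro hg'
  unfold GoodAt at hg hg'
  rw [swapSeq_right] at hg'
  have : gd (cnt ν (a + 1 + 1)) (ν ⟨a, Nat.lt_of_succ_lt h⟩) := by
    refine (gd_congr (cnt_swap ν a h _ _ (by omega)) (fun _ => cnt_swap ν a h _ _ (by omega))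
      (cnt_swap ν a h _ _ (by omega))).1 hg'
  exact gd_adj hadj this hg

theorem kill (t : k) (ht : t ≠ 0) (y : A) (h : algebraMap k A t * y = 0) : y = 0 := by
  rw [← Algebra.smul_def] at h
  exact (smul_eq_zero_iff_right ht).1 h

theorem slide_base (hQ : QAdmissible k (AB n) (dB n) Q) (R : Rels k Q S E X T)
    (s : ℕ) (hV : Van E X (s + 1)) (h1 : s + 1 < N) (h2 : s + 2 < N) (ν : Fin N → Fin n)
    (hadj : adjL (ν ⟨s, Nat.lt_of_succ_lt h1⟩ : ℕ) (ν ⟨s + 1, h1⟩))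
    (hv : ν ⟨s, Nat.lt_of_succ_lt h1⟩ = ν ⟨s + 2, h2⟩) :
    ((ν ⟨s, Nat.lt_of_succ_lt h1⟩ : ℕ) = 0 → X ⟨s, Nat.lt_of_succ_lt h1⟩ * E ν = 0) ∧
    ((ν ⟨s, Nat.lt_of_succ_lt h1⟩ : ℕ) ≠ 0 → E ν = 0) := by
  by_cases hg : ∃ p : Fin N, s + 1 ≤ (p : ℕ) ∧ ¬ GoodAt ν p
  · have := (hV ν).1 hg
    rw [this]
    simp
  push Not at hg
  have e1 : T s h1 * E ν = 0 := by
    rw [R.te, swap_bad R s hV s h1 le_rfl ν hadj (hg _ (by simp)), zero_mul]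
  have e2 : T (s + 1) h2 * E ν = 0 := by
    rw [R.te, swap_bad R s hV (s + 1) h2 (by omega) ν ?_ (hg _ (by simp)), zero_mul]
    have : (ν ⟨s + 1 + 1, h2⟩) = ν ⟨s, Nat.lt_of_succ_lt h1⟩ := hv.symm
    rw [this]
    unfold adjL at hadj ⊢
    exact hadj.symm
  have e3 := R.beq s h1 h2 ν hv
  rw [mul_assoc _ _ (E ν), e2, mul_zero, mul_assoc _ _ (E ν), e1, mul_zero, zero_add] at e3
  constructor
  · intro h0
    obtain ⟨t, ht, he⟩ := ev3_zero hQ hadj h0 (X ⟨s, Nat.lt_of_succ_lt h1⟩) (X ⟨s + 1, h1⟩)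
      (X ⟨s + 2, h2⟩)
    rw [he, mul_assoc] at e3
    have := kill t ht _ e3.symm
    rwa [add_mul, (hV ν).2 ⟨s + 2, h2⟩ (by simp), add_zero] at this
  · intro h0
    obtain ⟨t, ht, he⟩ := ev3_adj hQ hadj h0 (X ⟨s, Nat.lt_of_succ_lt h1⟩) (X ⟨s + 1, h1⟩)
      (X ⟨s + 2, h2⟩)
    rw [he] at e3
    exact kill t ht _ e3.symm

theorem slide (hQ : QAdmissible k (AB n) (dB n) Q) (R : Rels k Q S E X T)
    (s : ℕ) (hV : Van E X (s + 1)) (h1 : s + 1 < N) (d : ℕ) :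
    ∀ (hq : s + 2 + d < N) (ν : Fin N → Fin n),
    adjL (ν ⟨s, Nat.lt_of_succ_lt h1⟩ : ℕ) (ν ⟨s + 1, h1⟩) →
    ν ⟨s, Nat.lt_of_succ_lt h1⟩ = ν ⟨s + 2 + d, hq⟩ →
    (∀ p : Fin N, s + 2 ≤ (p : ℕ) → (p : ℕ) < s + 2 + d →
      comm (ν p) (ν ⟨s, Nat.lt_of_succ_lt h1⟩)) →
    ((ν ⟨s, Nat.lt_of_succ_lt h1⟩ : ℕ) = 0 → X ⟨s, Nat.lt_of_succ_lt h1⟩ * E ν = 0) ∧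
    ((ν ⟨s, Nat.lt_of_succ_lt h1⟩ : ℕ) ≠ 0 → E ν = 0) := by
  induction d with
  | zero => intro hq ν hadj hv _; exact slide_base hQ R s hV h1 hq ν hadj hv
  | succ d ih =>
    intro hq ν hadj hv hc
    have hq' : s + 2 + d + 1 < N := hq
    set ν' := swapSeq (s + 2 + d) hq' ν with hν'
    have f0 : ν' ⟨s, Nat.lt_of_succ_lt h1⟩ = ν ⟨s, Nat.lt_of_succ_lt h1⟩ :=
      swapSeq_other ν _ hq' _ (by simp; omega) (by simp; omega)
    have f1 : ν' ⟨s + 1, h1⟩ = ν ⟨s + 1, h1⟩ :=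
      swapSeq_other ν _ hq' _ (by simp; omega) (by simp; omega)
    have hcc : comm (ν ⟨s + 2 + d, Nat.lt_of_succ_lt hq'⟩ : ℕ) (ν ⟨s + 2 + d + 1, hq'⟩) := by
      have := hc ⟨s + 2 + d, Nat.lt_of_succ_lt hq'⟩ (by simp) (by simp)
      rw [hv] at this
      exact this
    have key := ih (Nat.lt_of_succ_lt hq') ν' (by rw [f0, f1]; exact hadj)
      (by rw [f0, hv, hν', swapSeq_left]; rfl)
      (by
        intro p hp1 hp2
        rw [f0, hν', swapSeq_other ν _ hq' p (by omega) (by omega)]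
        exact hc p hp1 (by omega))
    rw [f0] at key
    constructor
    · intro h0
      rw [← comm_conjX hQ R _ hq' ν hcc, posSwap_other _ hq' ⟨s, Nat.lt_of_succ_lt h1⟩ (by show s ≠ _; omega) (by show s ≠ _; omega),
        key.1 h0, mul_zero, zero_mul]
    · intro h0
      rw [← comm_conj hQ R _ hq' ν hcc, key.2 h0, mul_zero, zero_mul]

theorem van_core (hQ : QAdmissible k (AB n) (dB n) Q) (R : Rels k Q S E X T)
    (s : ℕ) (hs : s < N) (hV : Van E X (s + 1)) (ν : Fin N → Fin n)
    (hg : ∀ p : Fin N, s + 1 ≤ (p : ℕ) → GoodAt ν p) :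
    (¬ GoodAt ν ⟨s, hs⟩ → E ν = 0) ∧ X ⟨s, hs⟩ * E ν = 0 := by
  by_cases hlast : s + 1 = N
  · by_cases h0 : (ν ⟨s, hs⟩ : ℕ) = 0
    · refine ⟨fun hb => absurd ?_ hb, R.cyc0 ν ⟨s, hs⟩ hlast h0⟩
      unfold GoodAt gd
      simp only
      rw [cnt_top ν _ _ hlast.ge, cnt_top ν _ _ hlast.ge, cnt_top ν _ _ hlast.ge]
      exact ⟨Or.inl h0, rfl⟩
    · have := R.cyc1 ν ⟨s, hs⟩ hlast h0
      rw [this]; simp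
  have h1 : s + 1 < N := by omega
  by_cases heq : ν ⟨s, hs⟩ = ν ⟨s + 1, h1⟩
  · have e0 := R.txr s h1 ν heq
    have e1 := R.tsq s h1 ν
    rw [show Q (ν ⟨s, Nat.lt_of_succ_lt h1⟩) (ν ⟨s + 1, h1⟩) = 0 by rw [heq]; exact hQ.1 _,
      eval2_zero, zero_mul] at e1
    rw [mul_assoc, (hV ν).2 ⟨s + 1, h1⟩ (by simp), mul_zero] at e0
    have hsw : swapSeq s h1 ν = ν := by
      funext p
      by_cases hp1 : (p : ℕ) = s
      · have : p = ⟨s, hs⟩ := Fin.ext hp1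
        rw [this]; rw [swapSeq_left]; exact heq.symm
      · by_cases hp2 : (p : ℕ) = s + 1
        · have : p = ⟨s + 1, h1⟩ := Fin.ext hp2
          rw [this]; rw [swapSeq_right]; exact heq
        · exact swapSeq_other ν s h1 p hp1 hp2
    have e2 : T s h1 * E ν = E ν * T s h1 := by rw [R.te, hsw]
    have e4 : E ν * T s h1 = 0 := by
      have : (X ⟨s, Nat.lt_of_succ_lt h1⟩ * T s h1 * E ν + E ν) * T s h1 = 0 := by
        rw [← e0, zero_mul]
      rw [add_mul, mul_assoc _ (E ν), ← e2, mul_assoc (X _), ← mul_assoc (T s h1), e1, mul_zero,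
        zero_add] at this
      rw [← e2, this]
    have e5 : E ν = 0 := by
      rw [mul_assoc, e2, e4, mul_zero, zero_add] at e0
      exact e0.symm
    rw [e5]; simp
  by_cases hadj : adjL (ν ⟨s, hs⟩ : ℕ) (ν ⟨s + 1, h1⟩)
  · have hg1 := hg ⟨s + 1, h1⟩ le_rfl
    have esw := swap_bad R s hV s h1 le_rfl ν hadj hg1
    have e1 := R.tsq s h1 ν
    rw [mul_assoc, R.te, esw, zero_mul, mul_zero] at e1
    obtain ⟨t, t', s', ht, he⟩ := ev2_adj hQ hadj (X ⟨s, hs⟩) (X ⟨s + 1, h1⟩)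
    rw [he, add_mul, mul_assoc (algebraMap k A t'), pow_succ, mul_assoc _ (X ⟨s + 1, h1⟩),
      (hV ν).2 ⟨s + 1, h1⟩ (by simp), mul_zero, mul_zero, add_zero, mul_assoc] at e1
    have e2 := kill t ht _ e1.symm
    have hX : (ν ⟨s, hs⟩ : ℕ) ≠ 0 → X ⟨s, hs⟩ * E ν = 0 := by
      intro h0
      rwa [if_neg h0, pow_one] at e2
    have hcond : ((ν ⟨s, hs⟩ : ℕ) = 0 ∨ ¬ GoodAt ν ⟨s, hs⟩) →
        (((ν ⟨s, hs⟩ : ℕ) = 0 ∧ GoodAt ν ⟨s, hs⟩) ∨ ((ν ⟨s, hs⟩ : ℕ) ≠ 0)) ∧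
        0 < cnt ν (s + 2) (ν ⟨s, hs⟩) ∧
        cnt ν (s + 2) ((ν ⟨s, hs⟩ : ℕ) + 1) + 1 = cnt ν (s + 2) (ν ⟨s, hs⟩) ∧
        ((ν ⟨s, hs⟩ : ℕ) ≠ 0 →
          cnt ν (s + 2) ((ν ⟨s, hs⟩ : ℕ) - 1) = cnt ν (s + 2) (ν ⟨s, hs⟩)) := by
      intro hh
      have st := cnt_step ν ⟨s + 1, h1⟩
      have inv := good_inv ν (s + 1) h1.le hg
      unfold GoodAt gd at hh hg1 ⊢
      simp only at hh hg1 st ⊢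
      simp only [show s + 1 + 1 = s + 2 from rfl] at hh hg1 st ⊢
      unfold adjL at hadj
      set i : ℕ := (ν ⟨s, hs⟩ : ℕ) with hi
      set i' : ℕ := (ν ⟨s + 1, h1⟩ : ℕ) with hi'
      rcases hadj with hadj | hadj
      · have s1 := st i
        have s2 := st (i + 1)
        have s3 := st (i - 1)
        have v1 := inv (i - 1)
        rw [if_neg (by omega)] at s1 s3
        rw [if_pos (by omega)] at s2
        rw [← hadj] at hg1
        simp only [Nat.add_sub_cancel] at hg1
        by_cases h0 : i = 0
        · omega
        · rw [show i - 1 + 1 = i by omega] at v1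
          omega
      · have s1 := st i
        have s2 := st (i + 1)
        have s3 := st (i - 1)
        have v1 := inv i
        rw [if_neg (by omega)] at s1 s2
        rw [if_pos (by omega)] at s3
        rw [hadj] at hg1
        rw [show i' = i - 1 by omega] at hg1
        omega
    by_cases hc : (ν ⟨s, hs⟩ : ℕ) = 0 ∨ ¬ GoodAt ν ⟨s, hs⟩
    · obtain ⟨c1, c2, c3, c4⟩ := hcond hc
      obtain ⟨q, hq1, hq2, hq3⟩ := exists_pos ν (ν ⟨s, hs⟩)
        (cnt ν (s + 2) (ν ⟨s, hs⟩) - 1) (s + 2) (by omega) (by omega)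
      obtain ⟨d, hd⟩ := Nat.exists_eq_add_of_le hq1
      have hqN := q.2
      have key := slide hQ R s hV h1 d (by omega) ν hadj (by
          apply Fin.ext
          have : q = ⟨s + 2 + d, by omega⟩ := Fin.ext hd
          rw [this] at hq2
          exact hq2.symm) (by
          intro p hp1 hp2
          have g := hg q (by omega)
          unfold GoodAt gd at g
          rw [hq2, hq3] at g
          have l1 := cnt_lt_of ν hp1
          have a0 := cnt_anti ν (s := (p : ℕ) + 1) (s' := (q : ℕ) + 1) (ν p) (by omega)
          have a1 := cnt_step ν q (ν ⟨s, hs⟩)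
          rw [if_pos hq2] at a1
          have a2 := cnt_anti ν (s := (p : ℕ) + 1) (s' := (q : ℕ)) (ν ⟨s, hs⟩) (by omega)
          unfold comm adjL
          refine ⟨fun e => ?_, ?_⟩
          · rw [e] at l1; omega
          · rintro (e | e)
            · have e' : (ν p : ℕ) = (ν ⟨s, hs⟩ : ℕ) - 1 := by omega
              rw [e'] at l1 a0
              have := c4 (by omega)
              omega
            · rw [← e] at l1 a0
              omega)
      rcases c1 with c1 | c1
      · exact ⟨fun hb => absurd c1.2 hb, key.1 c1.1⟩
      · have := key.2 c1
        rw [this]; simp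
    · push Not at hc
      exact ⟨fun hb => absurd hc.2 hb, hX hc.1⟩
  · have hcm : comm (ν ⟨s, hs⟩ : ℕ) (ν ⟨s + 1, h1⟩) :=
      ⟨fun hh => heq (Fin.ext hh), hadj⟩
    constructor
    · intro hb
      rw [← comm_conj hQ R s h1 ν hcm, (hV (swapSeq s h1 ν)).1, mul_zero, zero_mul]
      exact ⟨⟨s + 1, h1⟩, le_rfl, fun hh => hb (good_of_comm ν s h1 hcm hh)⟩
    · rw [← comm_conjX hQ R s h1 ν hcm, (hV (swapSeq s h1 ν)).2, mul_zero, zero_mul]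
      rw [posSwap_val]
      simp

theorem van_all (hQ : QAdmissible k (AB n) (dB n) Q) (R : Rels k Q S E X T)
    (s : ℕ) (hs : s ≤ N) : Van E X s := by
  induction hs using Nat.decreasingInduction with
  | self =>
    intro ν
    refine ⟨fun ⟨p, hp, _⟩ => ?_, fun p hp => ?_⟩ <;> have := p.2 <;> omega
  | of_succ s hs ih =>
    intro ν
    by_cases hg : ∃ p : Fin N, s + 1 ≤ (p : ℕ) ∧ ¬ GoodAt ν p
    · have := (ih ν).1 hg
      rw [this]; simp
    push Not at hg
    have := van_core hQ R s hs ih ν hg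
    constructor
    · rintro ⟨p, hp, hb⟩
      by_cases hps : (p : ℕ) = s
      · have e : p = ⟨s, hs⟩ := Fin.ext hps
        rw [e] at hb
        exact this.1 hb
      · exact absurd (hg p (by omega)) hb
    · intro p hp
      by_cases hps : (p : ℕ) = s
      · have e : p = ⟨s, hs⟩ := Fin.ext hps
        rw [e]
        exact this.2
      · exact (ih ν).2 p (by omega)

theorem X_zero (hQ : QAdmissible k (AB n) (dB n) Q) (R : Rels k Q S E X T) (p : Fin N)
    (ν : Fin N → Fin n) : X p * E ν = 0 :=
  (van_all hQ R 0 (Nat.zero_le _) ν).2 p (Nat.zero_le _)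

theorem E_zero (hQ : QAdmissible k (AB n) (dB n) Q) (R : Rels k Q S E X T)
    (ν : Fin N → Fin n) (h : ¬ ∀ p, GoodAt ν p) : E ν = 0 := by
  push Not at h
  obtain ⟨p, hp⟩ := h
  exact (van_all hQ R 0 (Nat.zero_le _) ν).1 ⟨p, Nat.zero_le _, hp⟩

end Vanish

section Matsumoto

theorem permTab_cons {N : ℕ} (a : ℕ) (h : a + 1 < N) (σ : Equiv.Perm (Fin N))
    (U V : Fin N → ℕ × ℕ) :
    permTab (posSwap a h * σ) U V ↔ permTab σ (swapEnt a h U) V := by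
  unfold permTab
  simp only [swapEnt_rev, Equiv.Perm.mul_apply]

theorem permTab_one {N : ℕ} (U V : Fin N → ℕ × ℕ) : permTab 1 U V ↔ V = U := by
  unfold permTab
  simp only [Equiv.Perm.one_apply, Fin.rev_rev]
  exact funext_iff.symm

theorem permTab_rev {N : ℕ} {σ : Equiv.Perm (Fin N)} {U V : Fin N → ℕ × ℕ}
    (h : permTab σ U V) (p : Fin N) : V (Fin.rev (σ⁻¹ p)) = U p.rev := by
  have := h (Fin.rev (σ⁻¹ p))
  simpa using this

theorem permTab_unique {l : List ℕ} {N : ℕ} {σ σ' : Equiv.Perm (Fin N)} {U V : Fin N → ℕ × ℕ}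
    (hU : IsSYT l N U) (h : permTab σ U V) (h' : permTab σ' U V) : σ = σ' := by
  ext p
  have h1 := h p.rev
  have h2 := h' p.rev
  rw [Fin.rev_rev] at h1 h2
  have := Fin.rev_injective (hU.1 (h1.symm.trans h2))
  rw [this]

theorem permTab_exists {l : List ℕ} {N : ℕ} {U V : Fin N → ℕ × ℕ}
    (hU : IsSYT l N U) (hV : IsSYT l N V) : ∃ σ : Equiv.Perm (Fin N), permTab σ U V := by
  have h : ∀ q : Fin N, ∃ p, U p = V q := by
    intro q
    have : V q ∈ Set.range U := by rw [hU.2.1, ← hV.2.1]; exact ⟨q, rfl⟩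
    exact this
  choose g hg using h
  have ginj : Function.Injective (fun p : Fin N => (g p.rev).rev) := by
    intro p q hpq
    have := Fin.rev_injective hpq
    have h2 : V p.rev = V q.rev := by rw [← hg, ← hg, this]
    exact Fin.rev_injective (hV.1 h2)
  refine ⟨Equiv.ofBijective _ (Finite.injective_iff_bijective.1 ginj), ?_⟩
  intro q
  simp [hg]

theorem descent_std {l : List ℕ} {N : ℕ} {σ : Equiv.Perm (Fin N)} {U V : Fin N → ℕ × ℕ}
    (hU : IsSYT l N U) (hV : IsSYT l N V) (h : permTab σ U V) (a : ℕ) (ha : a + 1 < N)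
    (hd : σ⁻¹ ⟨a + 1, ha⟩ < σ⁻¹ ⟨a, Nat.lt_of_succ_lt ha⟩) : IsSYT l N (swapEnt a ha U) := by
  by_contra hs
  have h1 := permTab_rev h ⟨a, Nat.lt_of_succ_lt ha⟩
  have h2 := permTab_rev h ⟨a + 1, ha⟩
  rcases swap_nonstd hU a ha hs with h3 | h3
  · rw [← h1, ← h2] at h3
    have := hV.2.2.1 _ _ h3.1.symm h3.2
    rw [Fin.rev_lt_rev] at this
    exact absurd this (not_lt.2 hd.le)
  · rw [← h1, ← h2] at h3
    have := hV.2.2.2 _ _ h3.1.symm h3.2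
    rw [Fin.rev_lt_rev] at this
    exact absurd this (not_lt.2 hd.le)

theorem same_res {l : List ℕ} {n N : ℕ} (hdec : l.Pairwise (· > ·)) (hn : 0 < n)
    (hle : ∀ x ∈ l, x ≤ n)
    {σ : Equiv.Perm (Fin N)} {U V : Fin N → ℕ × ℕ}
    (hU : IsSYT l N U) (hV : IsSYT l N V) (h : permTab σ U V) (p q : Fin N) (hpq : p < q)
    (hd : σ⁻¹ q < σ⁻¹ p) : resSeq n hn U p ≠ resSeq n hn U q := by
  intro he
  have e : (resSeq n hn U p : ℕ) = resSeq n hn U q := by rw [he]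
  rw [resSeq_val hn hle hU, resSeq_val hn hle hU] at e
  have f1 := diag_facts (std_mem hU p.rev)
  have f2 := diag_facts (std_mem hU q.rev)
  have h1 := permTab_rev h p
  have h2 := permTab_rev h q
  have o1 := std_later hdec hU p q
  have o2 := std_later hdec hV (σ⁻¹ q) (σ⁻¹ p)
  rw [h1, h2] at o2
  rcases le_total (U p.rev).1 (U q.rev).1 with hh | hh
  · have o1 := std_later hdec hV (σ⁻¹ p) (σ⁻¹ q) (by rw [h1, h2]; exact hh)
      (by rw [h1, h2]; omega) hd.ne'
    have o2 := std_later hdec hU p q hh (by omega) hpq.ne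
    have := Fin.lt_def.1 hpq
    omega
  · have o1 := std_later hdec hV (σ⁻¹ q) (σ⁻¹ p) (by rw [h1, h2]; exact hh)
      (by rw [h1, h2]; omega) hd.ne
    have := Fin.lt_def.1 hd
    omega

variable {k : Type} [Field k] {A : Type} [Ring A] [Algebra k A] {n N : ℕ}
  {Q : Fin n → Fin n → MvPolynomial (Fin 2) k} {S : Set (Fin N → Fin n)}
  {E : (Fin N → Fin n) → A} {X : Fin N → A} {T : (j : ℕ) → j + 1 < N → A}

/-- product of the intertwiners along a word -/
def tw (T : (j : ℕ) → j + 1 < N → A) (w : Word N) : A := (w.map fun j => T j.1 j.2).prod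

theorem tw_cons (a : {j : ℕ // j + 1 < N}) (w : Word N) :
    tw T (a :: w) = T a.1 a.2 * tw T w := by simp [tw]

theorem tw_nil : tw T ([] : Word N) = 1 := by simp [tw]

theorem tw_E (R : Rels k Q S E X T) (hn : 0 < n) (w : Word N) :
    ∀ U V : Fin N → ℕ × ℕ, permTab (wordProd N w) U V →
      tw T w * E (resSeq n hn V) = E (resSeq n hn U) * tw T w := by
  induction w with
  | nil =>
    intro U V h
    rw [show wordProd N [] = 1 from rfl, permTab_one] at h
    rw [h, tw_nil, one_mul, mul_one]
  | cons a w ih =>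
    intro U V h
    rw [wordProd_cons, permTab_cons] at h
    rw [tw_cons, mul_assoc, ih _ _ h, ← mul_assoc, R.te, resSeq_swapEnt, swapSeq_swapSeq, mul_assoc]

theorem mul_left_self (a : ℕ) (h : a + 1 < N) (σ : Equiv.Perm (Fin N)) :
    posSwap a h * (posSwap a h * σ) = σ := by
  rw [← mul_assoc, posSwap_mul_self, one_mul]

/-- independence of the reduced word: induction hypothesis -/
def Indep (n : ℕ) (hn : 0 < n) (l : List ℕ) (E : (Fin N → Fin n) → A)
    (T : (j : ℕ) → j + 1 < N → A) (d : ℕ) : Prop :=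
  ∀ (U V : Fin N → ℕ × ℕ), IsSYT l N U → IsSYT l N V → ∀ w₁ w₂ : Word N,
    wordProd N w₁ = wordProd N w₂ → permTab (wordProd N w₁) U V →
    w₁.length = d → w₂.length = d → invN (wordProd N w₁) = d →
    tw T w₁ * E (resSeq n hn V) = tw T w₂ * E (resSeq n hn V)

theorem matsu_far (R : Rels k Q S E X T) (hn : 0 < n) (l : List ℕ) (d : ℕ)
    (ih : Indep n hn l E T d) (U V : Fin N → ℕ × ℕ) (hU : IsSYT l N U) (hV : IsSYT l N V)
    (a b : ℕ) (ha : a + 1 < N) (hb : b + 1 < N) (hab : a + 1 < b)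
    (u v : Word N)
    (hσ : wordProd N (⟨a, ha⟩ :: u) = wordProd N (⟨b, hb⟩ :: v))
    (hp : permTab (wordProd N (⟨a, ha⟩ :: u)) U V)
    (lu : u.length = d) (lv : v.length = d)
    (li : invN (wordProd N (⟨a, ha⟩ :: u)) = d + 1) :
    tw T (⟨a, ha⟩ :: u) * E (resSeq n hn V) = tw T (⟨b, hb⟩ :: v) * E (resSeq n hn V) := by
  obtain ⟨ra, da⟩ := reduced_cons ⟨a, ha⟩ u (by rw [li, List.length_cons, lu])
  obtain ⟨rb, db⟩ := reduced_cons ⟨b, hb⟩ v (by rw [← hσ, li, List.length_cons, lv])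
  rw [← hσ] at db
  simp only at da db
  have hUa := descent_std hU hV hp a ha da
  have hUb := descent_std hU hV hp b hb db
  set σ := wordProd N (⟨a, ha⟩ :: u) with hs
  have eu : wordProd N u = posSwap a ha * σ := by rw [hs, wordProd_cons, mul_left_self]
  have ev : wordProd N v = posSwap b hb * σ := by rw [hσ, wordProd_cons, mul_left_self]
  have hcm : posSwap a ha * posSwap b hb = posSwap b hb * posSwap a ha := by
    ext p
    rw [Equiv.Perm.mul_apply, Equiv.Perm.mul_apply, posSwap_val, posSwap_val, posSwap_val,
      posSwap_val]
    split_ifs <;> omega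
  have i1 : invN (posSwap b hb * (posSwap a ha * σ)) + 1 = invN (posSwap a ha * σ) := by
    apply invN_down
    rw [mul_inv_rev, posSwap_inv, Equiv.Perm.mul_apply, Equiv.Perm.mul_apply,
      posSwap_other a ha ⟨b + 1, hb⟩ (by show b + 1 ≠ a; omega) (by show b + 1 ≠ a + 1; omega),
      posSwap_other a ha ⟨b, Nat.lt_of_succ_lt hb⟩ (by show b ≠ a; omega)
        (by show b ≠ a + 1; omega)]
    exact db
  obtain ⟨z, hz, lz⟩ := exists_word _ (posSwap b hb * (posSwap a ha * σ)) rfl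
  have w1 : wordProd N (⟨b, hb⟩ :: z) = posSwap a ha * σ := by
    rw [wordProd_cons, hz, mul_left_self]
  have w2 : wordProd N (⟨a, ha⟩ :: z) = posSwap b hb * σ := by
    rw [wordProd_cons, hz, ← mul_assoc, hcm, mul_assoc, mul_left_self]
  rw [← eu] at i1 lz
  have lz' : z.length + 1 = d := by omega
  have k1 := ih (swapEnt a ha U) V hUa hV u (⟨b, hb⟩ :: z) (by rw [eu, w1])
    (by rw [eu, ← permTab_cons, mul_left_self]; exact hp) lu (by simpa using lz') (by omega)
  have k2 := ih (swapEnt b hb U) V hUb hV v (⟨a, ha⟩ :: z) (by rw [ev, w2])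
    (by rw [ev, ← permTab_cons, mul_left_self]; exact hp) lv (by simpa using lz') (by omega)
  rw [tw_cons, tw_cons, mul_assoc, mul_assoc, k1, k2, tw_cons, tw_cons]
  simp only [← mul_assoc]
  rw [R.tt a ha b hb (Or.inl hab)]

theorem braid_perm (a : ℕ) (ha : a + 1 < N) (hb : a + 1 + 1 < N) :
    posSwap a ha * (posSwap (a + 1) hb * posSwap a ha) =
      posSwap (a + 1) hb * (posSwap a ha * posSwap (a + 1) hb) := by
  have q0 : posSwap a ha ⟨a, Nat.lt_of_succ_lt ha⟩ = ⟨a + 1, ha⟩ := by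
    apply Fin.ext; rw [posSwap_val]; simp
  have q1 : posSwap a ha ⟨a + 1, ha⟩ = ⟨a, Nat.lt_of_succ_lt ha⟩ := by
    apply Fin.ext; rw [posSwap_val]; simp
  have q2 : posSwap a ha ⟨a + 1 + 1, hb⟩ = ⟨a + 1 + 1, hb⟩ := by
    apply Fin.ext; rw [posSwap_val]; simp; omega
  have q3 : posSwap (a + 1) hb ⟨a, Nat.lt_of_succ_lt ha⟩ = ⟨a, Nat.lt_of_succ_lt ha⟩ := by
    apply Fin.ext; rw [posSwap_val]; simp; omega
  have q4 : posSwap (a + 1) hb ⟨a + 1, ha⟩ = ⟨a + 1 + 1, hb⟩ := by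
    apply Fin.ext; rw [posSwap_val]; simp
  have q5 : posSwap (a + 1) hb ⟨a + 1 + 1, hb⟩ = ⟨a + 1, ha⟩ := by
    apply Fin.ext; rw [posSwap_val]; simp
  refine Equiv.ext fun p => ?_
  simp only [Equiv.Perm.mul_apply]
  by_cases h0 : (p : ℕ) = a
  · rw [show p = ⟨a, Nat.lt_of_succ_lt ha⟩ from Fin.ext h0, q0, q4, q2, q3, q0, q4]
  by_cases h1 : (p : ℕ) = a + 1
  · rw [show p = ⟨a + 1, ha⟩ from Fin.ext h1, q1, q3, q0, q4, q2, q5]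
  by_cases h2 : (p : ℕ) = a + 1 + 1
  · rw [show p = ⟨a + 1 + 1, hb⟩ from Fin.ext h2, q2, q5, q1, q3]
  rw [posSwap_other a ha p h0 h1, posSwap_other (a + 1) hb p h1 h2, posSwap_other a ha p h0 h1,
    posSwap_other (a + 1) hb p h1 h2]

theorem matsu_near (R : Rels k Q S E X T) (hn : 0 < n) (l : List ℕ)
    (hdec : l.Pairwise (· > ·)) (hle : ∀ x ∈ l, x ≤ n) (d : ℕ)
    (ih : Indep n hn l E T d) (U V : Fin N → ℕ × ℕ) (hU : IsSYT l N U) (hV : IsSYT l N V)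
    (a : ℕ) (ha : a + 1 < N) (hb : a + 1 + 1 < N)
    (u v : Word N)
    (hσ : wordProd N (⟨a, ha⟩ :: u) = wordProd N (⟨a + 1, hb⟩ :: v))
    (hp : permTab (wordProd N (⟨a, ha⟩ :: u)) U V)
    (lu : u.length = d) (lv : v.length = d)
    (li : invN (wordProd N (⟨a, ha⟩ :: u)) = d + 1) :
    tw T (⟨a, ha⟩ :: u) * E (resSeq n hn V) = tw T (⟨a + 1, hb⟩ :: v) * E (resSeq n hn V) := by
  obtain ⟨ra, da⟩ := reduced_cons ⟨a, ha⟩ u (by rw [li, List.length_cons, lu])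
  obtain ⟨rb, db⟩ := reduced_cons ⟨a + 1, hb⟩ v (by rw [← hσ, li, List.length_cons, lv])
  rw [← hσ] at db
  simp only at da db
  have hUa := descent_std hU hV hp a ha da
  have hUb := descent_std hU hV hp (a + 1) hb db
  have hne := same_res hdec hn hle hU hV hp ⟨a, Nat.lt_of_succ_lt ha⟩ ⟨a + 1 + 1, hb⟩
    (by rw [Fin.lt_def]; show a < a + 1 + 1; omega) (lt_trans db da)
  set σ := wordProd N (⟨a, ha⟩ :: u) with hs
  have eu : wordProd N u = posSwap a ha * σ := by rw [hs, wordProd_cons, mul_left_self]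
  have ev : wordProd N v = posSwap (a + 1) hb * σ := by rw [hσ, wordProd_cons, mul_left_self]
  have hbr : posSwap a ha * (posSwap (a + 1) hb * posSwap a ha) =
      posSwap (a + 1) hb * (posSwap a ha * posSwap (a + 1) hb) := braid_perm a ha hb
  have q0 : posSwap a ha ⟨a, Nat.lt_of_succ_lt ha⟩ = ⟨a + 1, ha⟩ := by
    apply Fin.ext; rw [posSwap_val]; simp
  have q1 : posSwap a ha ⟨a + 1, ha⟩ = ⟨a, Nat.lt_of_succ_lt ha⟩ := by
    apply Fin.ext; rw [posSwap_val]; simp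
  have q2 : posSwap a ha ⟨a + 1 + 1, hb⟩ = ⟨a + 1 + 1, hb⟩ := by
    apply Fin.ext; rw [posSwap_val]; simp; omega
  have q3 : posSwap (a + 1) hb ⟨a, Nat.lt_of_succ_lt ha⟩ = ⟨a, Nat.lt_of_succ_lt ha⟩ := by
    apply Fin.ext; rw [posSwap_val]; simp; omega
  have q4 : posSwap (a + 1) hb ⟨a + 1, ha⟩ = ⟨a + 1 + 1, hb⟩ := by
    apply Fin.ext; rw [posSwap_val]; simp
  have i1 : invN (posSwap (a + 1) hb * (posSwap a ha * σ)) + 1 = invN (posSwap a ha * σ) := by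
    apply invN_down
    rw [mul_inv_rev, posSwap_inv, Equiv.Perm.mul_apply, Equiv.Perm.mul_apply, q1, q2]
    exact lt_trans db da
  have i2 : invN (posSwap a ha * (posSwap (a + 1) hb * (posSwap a ha * σ))) + 1 =
      invN (posSwap (a + 1) hb * (posSwap a ha * σ)) := by
    apply invN_down
    simp only [mul_inv_rev, posSwap_inv, Equiv.Perm.mul_apply, q0, q1, q2, q3, q4]
    exact db
  obtain ⟨z, hz, lz⟩ := exists_word _
    (posSwap a ha * (posSwap (a + 1) hb * (posSwap a ha * σ))) rfl
  have w1 : wordProd N (⟨a + 1, hb⟩ :: ⟨a, ha⟩ :: z) = posSwap a ha * σ := by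
    rw [wordProd_cons, wordProd_cons, hz, mul_left_self, mul_left_self]
  have hz' : wordProd N z = posSwap (a + 1) hb * (posSwap a ha * (posSwap (a + 1) hb * σ)) := by
    rw [hz]
    simp only [← mul_assoc] at hbr ⊢
    rw [hbr]
  have w2 : wordProd N (⟨a, ha⟩ :: ⟨a + 1, hb⟩ :: z) = posSwap (a + 1) hb * σ := by
    rw [wordProd_cons, wordProd_cons, hz', mul_left_self, mul_left_self]
  rw [← eu] at i1 i2 lz
  have lz' : z.length + 1 + 1 = d := by omega
  have k1 := ih (swapEnt a ha U) V hUa hV u (⟨a + 1, hb⟩ :: ⟨a, ha⟩ :: z) (by rw [eu, w1])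
    (by rw [eu, ← permTab_cons, mul_left_self]; exact hp) lu (by simpa using lz') (by omega)
  have k2 := ih (swapEnt (a + 1) hb U) V hUb hV v (⟨a, ha⟩ :: ⟨a + 1, hb⟩ :: z) (by rw [ev, w2])
    (by rw [ev, ← permTab_cons, mul_left_self]; exact hp) lv (by simpa using lz') (by omega)
  have k3 := tw_E R hn z (swapEnt a ha (swapEnt (a + 1) hb (swapEnt a ha U))) V (by
    rw [hz, ← permTab_cons, mul_left_self, ← permTab_cons, mul_left_self, ← permTab_cons,
      mul_left_self]
    exact hp)
  rw [tw_cons, tw_cons, mul_assoc, mul_assoc, k1, k2, tw_cons, tw_cons, tw_cons, tw_cons]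
  have k4 := R.bne a ha hb (resSeq n hn (swapEnt a ha (swapEnt (a + 1) hb (swapEnt a ha U)))) (by
    simp only [resSeq_swapEnt, swapSeq, Function.comp]
    show resSeq n hn U (posSwap a ha (posSwap (a + 1) hb (posSwap a ha ⟨a, Nat.lt_of_succ_lt ha⟩)))
      ≠ resSeq n hn U (posSwap a ha (posSwap (a + 1) hb (posSwap a ha ⟨a + 1 + 1, hb⟩)))
    have q5 : posSwap (a + 1) hb ⟨a + 1 + 1, hb⟩ = ⟨a + 1, ha⟩ := by
      apply Fin.ext; rw [posSwap_val]; simp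
    rw [q0, q4, q2, q5, q1]
    exact hne.symm)
  simp only [mul_assoc] at k4 ⊢
  rw [k3]
  simp only [← mul_assoc] at k4 ⊢
  rw [k4]

theorem indep_all (R : Rels k Q S E X T) (hn : 0 < n) (l : List ℕ)
    (hdec : l.Pairwise (· > ·)) (hle : ∀ x ∈ l, x ≤ n) (d : ℕ) : Indep n hn l E T d := by
  induction d with
  | zero =>
    intro U V _ _ w₁ w₂ _ _ h1 h2 _
    rw [List.length_eq_zero_iff.1 h1, List.length_eq_zero_iff.1 h2]
  | succ d ih =>
    intro U V hU hV w₁ w₂ hw hp h1 h2 hi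
    match w₁, w₂, hw, hp, h1, h2, hi with
    | ⟨a, ha⟩ :: u, ⟨b, hb⟩ :: v, hw, hp, h1, h2, hi =>
      rw [List.length_cons] at h1 h2
      have hw' := hw.symm
      have hp' := hp
      have hi' := hi
      rw [hw] at hp' hi'
      rcases lt_trichotomy a b with hab | hab | hab
      · by_cases hab' : a + 1 = b
        · subst hab'
          exact matsu_near R hn l hdec hle d ih U V hU hV a ha hb u v hw hp (by omega) (by omega) hi
        · exact matsu_far R hn l d ih U V hU hV a b ha hb (by omega) u v hw hp (by omega)
            (by omega) hi
      · subst hab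
        obtain ⟨ra, da⟩ := reduced_cons ⟨a, ha⟩ u (by rw [hi, List.length_cons, h1])
        have hUa := descent_std hU hV hp a ha da
        rw [wordProd_cons, wordProd_cons] at hw
        rw [wordProd_cons, permTab_cons] at hp
        rw [tw_cons, tw_cons, mul_assoc, mul_assoc,
          ih (swapEnt a ha U) V hUa hV u v (mul_left_cancel hw) hp (by omega) (by omega) (by omega)]
      · by_cases hab' : b + 1 = a
        · subst hab'
          exact (matsu_near R hn l hdec hle d ih U V hU hV b hb ha v u hw' hp' (by omega)
            (by omega) hi').symm
        · exact (matsu_far R hn l d ih U V hU hV b a hb ha (by omega) v u hw' hp' (by omega)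
            (by omega) hi').symm

end Matsumoto

section Spanning

variable {k : Type} [Field k] {A : Type} [Ring A] [Algebra k A] {n N : ℕ}
  {Q : Fin n → Fin n → MvPolynomial (Fin 2) k} {l : List ℕ}
  {E : (Fin N → Fin n) → A} {X : Fin N → A} {T : (j : ℕ) → j + 1 < N → A}

/-- the elements `c_{U,V}` -/
def cEl (hn : 0 < n) (E : (Fin N → Fin n) → A) (T : (j : ℕ) → j + 1 < N → A)
    (ch : {f : Fin N → ℕ × ℕ // IsSYT l N f} × {f : Fin N → ℕ × ℕ // IsSYT l N f} → Word N)
    (p : {f : Fin N → ℕ × ℕ // IsSYT l N f} × {f : Fin N → ℕ × ℕ // IsSYT l N f}) : A :=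
  E (resSeq n hn p.1.val) * tw T (ch p) * E (resSeq n hn p.2.val)

theorem cEl_eq {S : Set (Fin N → Fin n)} (R : Rels k Q S E X T) (hn : 0 < n) {U V : Fin N → ℕ × ℕ} {w : Word N}
    (h : permTab (wordProd N w) U V) :
    E (resSeq n hn U) * tw T w * E (resSeq n hn V) = tw T w * E (resSeq n hn V) := by
  rw [mul_assoc, tw_E R hn w U V h, ← mul_assoc, R.idem]

theorem T_cEl
    (hQ : QAdmissible k (AB n) (dB n) Q) (hn : 0 < n) (hdec : l.Pairwise (· > ·))
  (hle : ∀ x ∈ l, x ≤ n)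
  (R : Rels k Q (Iβ (AB n) (Pi.single ⟨0, hn⟩ 1) (wtP n hn l) N) E X T)
  (ch : {f : Fin N → ℕ × ℕ // IsSYT l N f} × {f : Fin N → ℕ × ℕ // IsSYT l N f} → Word N)
  (hch : ∀ p, permTab (wordProd N (ch p)) p.1.val p.2.val ∧
        (ch p).length = invN (wordProd N (ch p)))
    (a : ℕ) (h : a + 1 < N)
    (p : {f : Fin N → ℕ × ℕ // IsSYT l N f} × {f : Fin N → ℕ × ℕ // IsSYT l N f}) :
    T a h * cEl hn E T ch p ∈ Submodule.span k (Set.range (cEl hn E T ch)) := by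
  obtain ⟨⟨U, hU⟩, ⟨V, hV⟩⟩ := p
  obtain ⟨hp, hl⟩ := hch ⟨⟨U, hU⟩, ⟨V, hV⟩⟩
  simp only at hp
  set w := ch ⟨⟨U, hU⟩, ⟨V, hV⟩⟩ with hw
  by_cases hs : IsSYT l N (swapEnt a h U)
  · obtain ⟨hp', hl'⟩ := hch ⟨⟨swapEnt a h U, hs⟩, ⟨V, hV⟩⟩
    have hmem : cEl hn E T ch ⟨⟨swapEnt a h U, hs⟩, ⟨V, hV⟩⟩ ∈
        Submodule.span k (Set.range (cEl hn E T ch)) := Submodule.subset_span ⟨_, rfl⟩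
    simp only at hp'
    suffices hh : T a h * cEl hn E T ch ⟨⟨U, hU⟩, ⟨V, hV⟩⟩ =
        cEl hn E T ch ⟨⟨swapEnt a h U, hs⟩, ⟨V, hV⟩⟩ by rw [hh]; exact hmem
    unfold cEl
    simp only
    rw [cEl_eq R hn hp', cEl_eq R hn hp]
    set w' := ch ⟨⟨swapEnt a h U, hs⟩, ⟨V, hV⟩⟩ with hw'
    have hp2 : permTab (posSwap a h * wordProd N w) (swapEnt a h U) V := by
      rw [permTab_cons, swapEnt_swapEnt]; exact hp
    have e1 : wordProd N w' = posSwap a h * wordProd N w := permTab_unique hs hp' hp2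
    rcases inv_ne (wordProd N w) a h with hi | hi
    · have hi := invN_up _ _ _ hi
      have := indep_all R hn l hdec hle w'.length (swapEnt a h U) V hs hV w' (⟨a, h⟩ :: w)
        (by rw [wordProd_cons, e1]) hp' rfl
        (by rw [List.length_cons, hl', e1, hi, hl]) hl'.symm
      rw [this, tw_cons, mul_assoc]
    · have hi := invN_down _ _ _ hi
      have e2 : wordProd N w = wordProd N (⟨a, h⟩ :: w') := by
        rw [wordProd_cons, e1, mul_left_self]
      have := indep_all R hn l hdec hle w.length U V hU hV w (⟨a, h⟩ :: w')
        e2 hp rfl (by rw [List.length_cons, hl', e1, hi, hl]) hl.symm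
      rw [this, tw_cons, mul_assoc, tw_E R hn w' _ _ hp', ← mul_assoc, ← mul_assoc,
        comm_sq hQ R]
      rw [← swap_std_iff hdec hn hle hs a h, swapEnt_swapEnt]
      exact hU
  · have hz : E (swapSeq a h (resSeq n hn U)) = 0 := by
      apply E_zero hQ R
      intro hg
      apply hs
      rw [swap_std_iff hdec hn hle hU a h]
      exact good_swap_comm _ _ _ (std_good hdec hn hle hU _) (std_good hdec hn hle hU _) (hg _)
    unfold cEl
    simp only
    rw [← mul_assoc, ← mul_assoc, R.te, hz, zero_mul, zero_mul, zero_mul]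
    exact Submodule.zero_mem _

theorem one_cEl
    (hQ : QAdmissible k (AB n) (dB n) Q) (hn : 0 < n) (hdec : l.Pairwise (· > ·))
  (hle : ∀ x ∈ l, x ≤ n)
  (R : Rels k Q (Iβ (AB n) (Pi.single ⟨0, hn⟩ 1) (wtP n hn l) N) E X T)
  (ch : {f : Fin N → ℕ × ℕ // IsSYT l N f} × {f : Fin N → ℕ × ℕ // IsSYT l N f} → Word N)
  (hch : ∀ p, permTab (wordProd N (ch p)) p.1.val p.2.val ∧
        (ch p).length = invN (wordProd N (ch p)))
    : (1 : A) ∈ Submodule.span k (Set.range (cEl hn E T ch)) := by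
  rw [← R.sum]
  apply Submodule.sum_mem
  intro ν _
  by_cases hS : ν ∈ Iβ (AB n) (Pi.single ⟨0, hn⟩ 1) (wtP n hn l) N
  · by_cases hg : ∀ p, GoodAt ν p
    · obtain ⟨f, hf, rfl⟩ := exists_std hdec hn hle ν hS hg
      refine Submodule.subset_span ⟨⟨⟨f, hf⟩, ⟨f, hf⟩⟩, ?_⟩
      obtain ⟨hp, hl⟩ := hch ⟨⟨f, hf⟩, ⟨f, hf⟩⟩
      have h1 : wordProd N (ch ⟨⟨f, hf⟩, ⟨f, hf⟩⟩) = 1 :=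
        permTab_unique hf hp ((permTab_one f f).2 rfl)
      rw [h1, invN_one, List.length_eq_zero_iff] at hl
      unfold cEl
      rw [hl, tw_nil, mul_one, R.idem]
    · rw [E_zero hQ R ν hg]; exact Submodule.zero_mem _
  · rw [R.out ν hS]; exact Submodule.zero_mem _

theorem mul_span (hn : 0 < n)
    (ch : {f : Fin N → ℕ × ℕ // IsSYT l N f} × {f : Fin N → ℕ × ℕ // IsSYT l N f} → Word N)
    (x : A) (hx : ∀ p, x * cEl hn E T ch p ∈ Submodule.span k (Set.range (cEl hn E T ch)))
    (y : A) (hy : y ∈ Submodule.span k (Set.range (cEl hn E T ch))) :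
    x * y ∈ Submodule.span k (Set.range (cEl hn E T ch)) := by
  induction hy using Submodule.span_induction with
  | mem y hy => obtain ⟨p, rfl⟩ := hy; exact hx p
  | zero => rw [mul_zero]; exact Submodule.zero_mem _
  | add y z _ _ h1 h2 => rw [mul_add]; exact Submodule.add_mem _ h1 h2
  | smul t y _ h1 => rw [mul_smul_comm]; exact Submodule.smul_mem _ _ h1

theorem span_top (φ : FA k n N →ₐ[k] A) (hsurj : Function.Surjective φ)
    (hQ : QAdmissible k (AB n) (dB n) Q) (hn : 0 < n) (hdec : l.Pairwise (· > ·))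
    (hle : ∀ x ∈ l, x ≤ n)
    (R : Rels k Q (Iβ (AB n) (Pi.single ⟨0, hn⟩ 1) (wtP n hn l) N)
      (fun ν => φ (Eg k ν)) (fun p => φ (Xg k p)) (fun j h => φ (Tg k j h)))
    (ch : {f : Fin N → ℕ × ℕ // IsSYT l N f} × {f : Fin N → ℕ × ℕ // IsSYT l N f} → Word N)
    (hch : ∀ p, permTab (wordProd N (ch p)) p.1.val p.2.val ∧
        (ch p).length = invN (wordProd N (ch p))) :
    Submodule.span k (Set.range
      (cEl hn (fun ν => φ (Eg k ν)) (fun j h => φ (Tg k j h)) ch)) = ⊤ := by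
  set M := Submodule.span k (Set.range
      (cEl hn (fun ν => φ (Eg k ν)) (fun j h => φ (Tg k j h)) ch)) with hM
  have key : ∀ x : FA k n N, ∀ y ∈ M, φ x * y ∈ M := by
    intro x
    induction x using FreeAlgebra.induction with
    | grade0 r =>
      intro y hy
      rw [AlgHom.commutes, ← Algebra.smul_def]
      exact Submodule.smul_mem _ _ hy
    | grade1 g =>
      refine mul_span hn ch _ ?_
      intro p
      cases g with
      | e ν =>
        by_cases hν : ν = resSeq n hn p.1.val
        · have : φ (FreeAlgebra.ι k (Gen.e ν)) *
              cEl hn (fun ν => φ (Eg k ν)) (fun j h => φ (Tg k j h)) ch p =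
              cEl hn (fun ν => φ (Eg k ν)) (fun j h => φ (Tg k j h)) ch p := by
            unfold cEl
            have e := R.idem ν
            rw [← hν, ← mul_assoc, ← mul_assoc]
            change φ (Eg k ν) * _ * _ * _ = _
            rw [e]
          rw [this]
          exact Submodule.subset_span ⟨p, rfl⟩
        · have : φ (FreeAlgebra.ι k (Gen.e ν)) *
              cEl hn (fun ν => φ (Eg k ν)) (fun j h => φ (Tg k j h)) ch p = 0 := by
            unfold cEl
            have e := R.orth ν _ hν
            rw [← mul_assoc, ← mul_assoc]
            change φ (Eg k ν) * _ * _ * _ = _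
            rw [e, zero_mul, zero_mul]
          rw [this]
          exact Submodule.zero_mem _
      | x q =>
        have : φ (FreeAlgebra.ι k (Gen.x q)) *
              cEl hn (fun ν => φ (Eg k ν)) (fun j h => φ (Tg k j h)) ch p = 0 := by
          unfold cEl
          have e := X_zero hQ R q (resSeq n hn p.1.val)
          rw [← mul_assoc, ← mul_assoc]
          change φ (Xg k q) * _ * _ * _ = _
          rw [e, zero_mul, zero_mul]
        rw [this]
        exact Submodule.zero_mem _
      | t a h => exact T_cEl hQ hn hdec hle R ch hch a h p
    | mul a b ha hb =>
      intro y hy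
      rw [map_mul, mul_assoc]
      exact ha _ (hb _ hy)
    | add a b ha hb =>
      intro y hy
      rw [map_add, add_mul]
      exact Submodule.add_mem _ (ha _ hy) (hb _ hy)
  rw [eq_top_iff]
  intro z _
  obtain ⟨x, rfl⟩ := hsurj z
  have := key x 1 (one_cEl hQ hn hdec hle R ch hch)
  rwa [mul_one] at this

end Spanning

section Representation

variable {k : Type} [Field k] {n N : ℕ}
  {Q : Fin n → Fin n → MvPolynomial (Fin 2) k} {l : List ℕ}

/-- the generators act on tableaux -/
noncomputable def genOp (k : Type) [Field k] (n : ℕ) (hn : 0 < n) (N : ℕ) (l : List ℕ) :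
    Gen n N → Module.End k (TabV k (IsSYT l N))
  | Gen.e ν => eOpTab k n hn (IsSYT l N) ν
  | Gen.x _ => 0
  | Gen.t j h => tOpTab k (IsSYT l N) j h

noncomputable def repHom (k : Type) [Field k] (n : ℕ) (hn : 0 < n) (N : ℕ) (l : List ℕ) :
    FA k n N →ₐ[k] Module.End k (TabV k (IsSYT l N)) :=
  FreeAlgebra.lift k (genOp k n hn N l)

theorem rep_E (hn : 0 < n) (ν : Fin N → Fin n) :
    repHom k n hn N l (Eg k ν) = eOpTab k n hn (IsSYT l N) ν := by
  simp [repHom, Eg, genOp]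

theorem rep_X (hn : 0 < n) (p : Fin N) : repHom k n hn N l (Xg k p) = 0 := by
  simp [repHom, Xg, genOp]

theorem rep_T (hn : 0 < n) (j : ℕ) (h : j + 1 < N) :
    repHom k n hn N l (Tg k j h) = tOpTab k (IsSYT l N) j h := by
  simp [repHom, Tg, genOp]

theorem eOp_apply (hn : 0 < n) (ν : Fin N → Fin n) (u : TabV k (IsSYT l N))
    (U : {f : Fin N → ℕ × ℕ // IsSYT l N f}) :
    eOpTab k n hn (IsSYT l N) ν u U = if resSeq n hn U.val = ν then u U else 0 := by
  unfold eOpTab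
  rw [LinearMap.pi_apply]
  split_ifs <;> rfl

/-- extension by zero -/
noncomputable def xt (u : TabV k (IsSYT l N)) (f : Fin N → ℕ × ℕ) : k :=
  if h : IsSYT l N f then u ⟨f, h⟩ else 0

theorem xt_val (u : TabV k (IsSYT l N)) (U : {f : Fin N → ℕ × ℕ // IsSYT l N f}) :
    xt u U.val = u U := by
  unfold xt
  rw [dif_pos U.2]

theorem tOp_apply (j : ℕ) (h : j + 1 < N) (u : TabV k (IsSYT l N))
    (U : {f : Fin N → ℕ × ℕ // IsSYT l N f}) :
    tOpTab k (IsSYT l N) j h u U = xt u (swapEnt j h U.val) := by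
  unfold tOpTab xt
  rw [LinearMap.pi_apply]
  split_ifs <;> rfl

theorem xt_tOp (j : ℕ) (h : j + 1 < N) (u : TabV k (IsSYT l N)) (f : Fin N → ℕ × ℕ) :
    xt (tOpTab k (IsSYT l N) j h u) f = if IsSYT l N f then xt u (swapEnt j h f) else 0 := by
  by_cases hf : IsSYT l N f
  · rw [if_pos hf]
    exact (xt_val _ ⟨f, hf⟩).trans (tOp_apply j h u ⟨f, hf⟩)
  · rw [if_neg hf]
    unfold xt
    rw [dif_neg hf]

theorem xt_not (u : TabV k (IsSYT l N)) (f : Fin N → ℕ × ℕ) (hf : ¬ IsSYT l N f) : xt u f = 0 := by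
  unfold xt
  rw [dif_neg hf]

theorem eOp_zero (hn : 0 < n) (ν : Fin N → Fin n)
    (h : ∀ f, IsSYT l N f → resSeq n hn f ≠ ν) : eOpTab k n hn (IsSYT l N) ν = 0 := by
  ext u U
  · simp only [LinearMap.comp_apply, LinearMap.zero_apply, Pi.zero_apply]
    rw [eOp_apply, if_neg (h _ U.2)]

theorem eOp_good (hn : 0 < n) (hdec : l.Pairwise (· > ·)) (hle : ∀ x ∈ l, x ≤ n)
    (ν : Fin N → Fin n) (h : ¬ ∀ p, GoodAt ν p) : eOpTab k n hn (IsSYT l N) ν = 0 := by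
  apply eOp_zero
  rintro f hf rfl
  exact h (std_good hdec hn hle hf)

theorem op_ext {f g : Module.End k (TabV k (IsSYT l N))} (h : ∀ u U, f u U = g u U) : f = g :=
  LinearMap.ext fun u => funext fun U => h u U

end Representation

section RepRel

variable {k : Type} [Field k] {n N : ℕ}
  {Q : Fin n → Fin n → MvPolynomial (Fin 2) k} {l : List ℕ}

theorem swapEnt_comm (f : Fin N → ℕ × ℕ) (a : ℕ) (ha : a + 1 < N) (b : ℕ) (hb : b + 1 < N)
    (hab : a + 1 < b ∨ b + 1 < a) :
    swapEnt a ha (swapEnt b hb f) = swapEnt b hb (swapEnt a ha f) := by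
  funext q
  obtain ⟨p, rfl⟩ : ∃ p : Fin N, q = p.rev := ⟨q.rev, (Fin.rev_rev q).symm⟩
  rw [swapEnt_rev, swapEnt_rev, swapEnt_rev, swapEnt_rev]
  congr 2
  apply Fin.ext
  simp only [posSwap_val]
  split_ifs <;> omega

theorem swapEnt_braid (f : Fin N → ℕ × ℕ) (j : ℕ) (h1 : j + 1 < N) (h2 : j + 1 + 1 < N) :
    swapEnt (j + 1) h2 (swapEnt j h1 (swapEnt (j + 1) h2 f)) =
      swapEnt j h1 (swapEnt (j + 1) h2 (swapEnt j h1 f)) := by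
  funext q
  obtain ⟨p, rfl⟩ : ∃ p : Fin N, q = p.rev := ⟨q.rev, (Fin.rev_rev q).symm⟩
  simp only [swapEnt_rev]
  have := congrArg (fun σ : Equiv.Perm (Fin N) => σ p) (braid_perm j h1 h2)
  simp only [Equiv.Perm.mul_apply] at this
  rw [this]

theorem tt_op (hn : 0 < n) (hdec : l.Pairwise (· > ·)) (hle : ∀ x ∈ l, x ≤ n)
    (a : ℕ) (ha : a + 1 < N) (b : ℕ) (hb : b + 1 < N) (hab : a + 1 < b ∨ b + 1 < a) :
    tOpTab k (IsSYT l N) a ha * tOpTab k (IsSYT l N) b hb =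
      tOpTab k (IsSYT l N) b hb * tOpTab k (IsSYT l N) a ha := by
  have key : ∀ (a : ℕ) (ha : a + 1 < N) (b : ℕ) (hb : b + 1 < N) (hab : a + 1 < b ∨ b + 1 < a)
      (u : TabV k (IsSYT l N)) (U : {f : Fin N → ℕ × ℕ // IsSYT l N f}),
      (tOpTab k (IsSYT l N) a ha * tOpTab k (IsSYT l N) b hb) u U =
      if comm (resSeq n hn U.val ⟨a, Nat.lt_of_succ_lt ha⟩ : ℕ) (resSeq n hn U.val ⟨a + 1, ha⟩) ∧
        comm (resSeq n hn U.val ⟨b, Nat.lt_of_succ_lt hb⟩ : ℕ) (resSeq n hn U.val ⟨b + 1, hb⟩)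
      then xt u (swapEnt b hb (swapEnt a ha U.val)) else 0 := by
    intro a ha b hb hab u U
    rw [Module.End.mul_apply, tOp_apply, xt_tOp]
    by_cases h : IsSYT l N (swapEnt a ha U.val)
    · rw [if_pos h]
      have h1 := (swap_std_iff hdec hn hle U.2 a ha).1 h
      by_cases h2 : IsSYT l N (swapEnt b hb (swapEnt a ha U.val))
      · have h3 := (swap_std_iff hdec hn hle h b hb).1 h2
        rw [resSeq_swapEnt, swapSeq_other _ a ha _ (by show b ≠ _; omega) (by show b ≠ _; omega),
          swapSeq_other _ a ha _ (by show b + 1 ≠ _; omega) (by show b + 1 ≠ _; omega)] at h3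
        rw [if_pos ⟨h1, h3⟩]
      · have h3 := fun hh => h2 ((swap_std_iff hdec hn hle h b hb).2 hh)
        rw [resSeq_swapEnt, swapSeq_other _ a ha _ (by show b ≠ _; omega) (by show b ≠ _; omega),
          swapSeq_other _ a ha _ (by show b + 1 ≠ _; omega) (by show b + 1 ≠ _; omega)] at h3
        rw [if_neg (fun hh => h3 hh.2), xt_not _ _ h2]
    · rw [if_neg h, if_neg]
      exact fun hh => h ((swap_std_iff hdec hn hle U.2 a ha).2 hh.1)
  apply op_ext
  intro u U
  rw [key a ha b hb hab, key b hb a ha (by omega), swapEnt_comm _ a ha b hb hab]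
  exact if_congr and_comm rfl rfl

theorem braid_op (hn : 0 < n) (hdec : l.Pairwise (· > ·)) (hle : ∀ x ∈ l, x ≤ n)
    (j : ℕ) (h1 : j + 1 < N) (h2 : j + 1 + 1 < N) :
    tOpTab k (IsSYT l N) (j + 1) h2 * tOpTab k (IsSYT l N) j h1 *
        tOpTab k (IsSYT l N) (j + 1) h2 =
      tOpTab k (IsSYT l N) j h1 * tOpTab k (IsSYT l N) (j + 1) h2 *
        tOpTab k (IsSYT l N) j h1 := by
  apply op_ext
  intro u U
  simp only [Module.End.mul_apply]
  rw [tOp_apply, tOp_apply, xt_tOp, xt_tOp, xt_tOp, xt_tOp, swapEnt_braid]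
  have hU := U.2
  generalize U.val = f at hU
  have A0 := swap_std_iff hdec hn hle hU j h1
  have A1 := swap_std_iff hdec hn hle hU (j + 1) h2
  have B0 := fun hh => swap_std_iff hdec hn hle (f := swapEnt j h1 f) hh (j + 1) h2
  have B1 := fun hh => swap_std_iff hdec hn hle (f := swapEnt (j + 1) h2 f) hh j h1
  have C0 := fun hh =>
    swap_std_iff hdec hn hle (f := swapEnt (j + 1) h2 (swapEnt j h1 f)) hh j h1
  have C1 := fun hh =>
    swap_std_iff hdec hn hle (f := swapEnt j h1 (swapEnt (j + 1) h2 f)) hh (j + 1) h2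
  have L0 := swapSeq_left (n := n) (N := N)
  simp only [resSeq_swapEnt] at B0 B1 C0 C1
  have e1 : ∀ ν : Fin N → Fin n, swapSeq j h1 ν ⟨j + 1 + 1, h2⟩ = ν ⟨j + 1 + 1, h2⟩ :=
    fun ν => swapSeq_other _ _ _ _ (by show j + 1 + 1 ≠ _; omega) (by show j + 1 + 1 ≠ _; omega)
  have e2 : ∀ ν : Fin N → Fin n, swapSeq (j + 1) h2 ν ⟨j, Nat.lt_of_succ_lt h1⟩ =
      ν ⟨j, Nat.lt_of_succ_lt h1⟩ :=
    fun ν => swapSeq_other _ _ _ _ (by show j ≠ _; omega) (by show j ≠ _; omega)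
  have e3 : ∀ ν : Fin N → Fin n, swapSeq j h1 ν ⟨j, Nat.lt_of_succ_lt h1⟩ = ν ⟨j + 1, h1⟩ :=
    fun ν => swapSeq_left ν j h1
  have e4 : ∀ ν : Fin N → Fin n, swapSeq j h1 ν ⟨j + 1, h1⟩ = ν ⟨j, Nat.lt_of_succ_lt h1⟩ :=
    fun ν => swapSeq_right ν j h1
  have e5 : ∀ ν : Fin N → Fin n, swapSeq (j + 1) h2 ν ⟨j + 1, h1⟩ = ν ⟨j + 1 + 1, h2⟩ :=
    fun ν => swapSeq_left ν (j + 1) h2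
  have e6 : ∀ ν : Fin N → Fin n, swapSeq (j + 1) h2 ν ⟨j + 1 + 1, h2⟩ = ν ⟨j + 1, h1⟩ :=
    fun ν => swapSeq_right ν (j + 1) h2
  simp only [e1, e2, e3, e4, e5, e6] at A0 A1 B0 B1 C0 C1
  rw [swapEnt_braid] at C1
  generalize swapEnt j h1 (swapEnt (j + 1) h2 (swapEnt j h1 f)) = W at *
  by_cases hW : IsSYT l N W
  · simp only [hW, true_iff] at C0 C1
    by_cases g1 : IsSYT l N (swapEnt j h1 f)
    · by_cases g2 : IsSYT l N (swapEnt (j + 1) h2 (swapEnt j h1 f))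
      · have i1 := A1.2 (C0 g2)
        rw [if_pos g1, if_pos g2, if_pos i1, if_pos ((B1 i1).2 ((B0 g1).1 g2))]
      · rw [if_pos g1, if_neg g2]
        split_ifs with i1 i2
        · exact absurd ((B0 g1).2 ((B1 i1).1 i2)) g2
        · rfl
        · rfl
    · rw [if_neg g1]
      split_ifs with i1 i2
      · exact absurd (A0.2 (C1 i2)) g1
      · rfl
      · rfl
  · rw [xt_not _ _ hW]
    simp

theorem ev2_van (hQ : QAdmissible k (AB n) (dB n) Q) {A : Type} [Ring A] [Algebra k A]
    {i j : Fin n} (h : adjL (i : ℕ) j) :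
    eval2 k (Q i j) (0 : A) 0 = 0 := by
  obtain ⟨t, t', s, -, he⟩ := ev2_adj hQ h (0 : A) 0
  rw [he]
  split_ifs <;> simp

theorem tsq_op (hQ : QAdmissible k (AB n) (dB n) Q)
    (hn : 0 < n) (hdec : l.Pairwise (· > ·)) (hle : ∀ x ∈ l, x ≤ n)
    (j : ℕ) (h : j + 1 < N) (ν : Fin N → Fin n) :
    tOpTab k (IsSYT l N) j h * tOpTab k (IsSYT l N) j h * eOpTab k n hn (IsSYT l N) ν =
      eval2 k (Q (ν ⟨j, Nat.lt_of_succ_lt h⟩) (ν ⟨j + 1, h⟩))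
        (0 : Module.End k (TabV k (IsSYT l N))) 0 * eOpTab k n hn (IsSYT l N) ν := by
  by_cases hg : ∀ p, GoodAt ν p
  swap
  · rw [eOp_good hn hdec hle ν hg, mul_zero, mul_zero]
  have hne : ν ⟨j, Nat.lt_of_succ_lt h⟩ ≠ ν ⟨j + 1, h⟩ :=
    fun hh => good_eq_false ν j h hh (hg _) (hg _)
  have key : ∀ (u : TabV k (IsSYT l N)) (U : {f : Fin N → ℕ × ℕ // IsSYT l N f}),
      (tOpTab k (IsSYT l N) j h * tOpTab k (IsSYT l N) j h *
        eOpTab k n hn (IsSYT l N) ν) u U =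
      if comm (ν ⟨j, Nat.lt_of_succ_lt h⟩ : ℕ) (ν ⟨j + 1, h⟩) then
        eOpTab k n hn (IsSYT l N) ν u U else 0 := by
    intro u U
    simp only [Module.End.mul_apply]
    rw [tOp_apply, xt_tOp, swapEnt_swapEnt, xt_val, eOp_apply]
    by_cases hU : resSeq n hn U.val = ν
    · rw [if_pos hU, swap_std_iff hdec hn hle U.2, hU]
    · rw [if_neg hU]
      simp
  apply op_ext
  intro u U
  rw [key]
  by_cases hc : comm (ν ⟨j, Nat.lt_of_succ_lt h⟩ : ℕ) (ν ⟨j + 1, h⟩)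
  · rw [if_pos hc, Q_comm hQ hc, eval2_one, one_mul]
  · rw [if_neg hc, ev2_van hQ, zero_mul]
    · rfl
    · by_contra hadj
      exact hc ⟨fun hh => hne (Fin.ext hh), hadj⟩

theorem te_op (hn : 0 < n) (j : ℕ) (h : j + 1 < N) (ν : Fin N → Fin n) :
    tOpTab k (IsSYT l N) j h * eOpTab k n hn (IsSYT l N) ν =
      eOpTab k n hn (IsSYT l N) (swapSeq j h ν) * tOpTab k (IsSYT l N) j h := by
  apply op_ext
  intro u U
  simp only [Module.End.mul_apply]
  rw [tOp_apply, eOp_apply, tOp_apply]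
  by_cases hs : IsSYT l N (swapEnt j h U.val)
  · have e1 := xt_val (eOpTab k n hn (IsSYT l N) ν u) ⟨_, hs⟩
    have e2 := xt_val u ⟨_, hs⟩
    dsimp only at e1 e2
    rw [e1, e2, eOp_apply]
    dsimp only
    rw [resSeq_swapEnt]
    have : swapSeq j h (resSeq n hn U.val) = ν ↔ resSeq n hn U.val = swapSeq j h ν := by
      constructor
      · intro hh
        rw [← hh, swapSeq_swapSeq]
      · intro hh
        rw [hh, swapSeq_swapSeq]
    simp only [this]
  · rw [xt_not _ _ hs, xt_not _ _ hs]
    simp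

theorem rep_rel (hQ : QAdmissible k (AB n) (dB n) Q)
    (hn : 0 < n) (hdec : l.Pairwise (· > ·)) (hle : ∀ x ∈ l, x ≤ n) (a b : FA k n N)
    (h : CRel k Q (Iβ (AB n) (Pi.single ⟨0, hn⟩ 1) (wtP n hn l) N) (Pi.single ⟨0, hn⟩ 1) a b) :
    repHom k n hn N l a = repHom k n hn N l b := by
  rcases h with h | h
  · cases h with
    | e_orth ν ν' hne =>
      rw [map_mul, rep_E, rep_E, map_zero]
      apply op_ext
      intro u U
      rw [Module.End.mul_apply, eOp_apply, eOp_apply]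
      split_ifs with h1 h2
      · exact absurd (h1.symm.trans h2) hne
      · rfl
      · rfl
    | e_idem ν =>
      rw [map_mul, rep_E]
      apply op_ext
      intro u U
      rw [Module.End.mul_apply, eOp_apply, eOp_apply]
      split_ifs <;> rfl
    | e_sum =>
      rw [map_sum, map_one]
      simp only [rep_E]
      apply op_ext
      intro u U
      rw [LinearMap.sum_apply, Finset.sum_apply]
      simp only [eOp_apply]
      simp
    | e_out ν hν =>
      rw [rep_E, map_zero]
      apply eOp_zero
      rintro f hf rfl
      exact hν (std_Iβ hn hf)
    | xx p q => simp only [map_mul, rep_X]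
    | xe p ν => simp only [map_mul, rep_X, mul_zero, zero_mul]
    | te j h ν =>
      simp only [map_mul, rep_E, rep_T]
      exact te_op hn j h ν
    | tt a ha b hb hab =>
      simp only [map_mul, rep_T]
      exact tt_op hn hdec hle a ha b hb hab
    | tsq j h ν =>
      simp only [map_mul, rep_E, rep_T, map_eval2, rep_X]
      exact tsq_op hQ hn hdec hle j h ν
    | tx_left j h ν hv =>
      simp only [map_mul, map_sub, rep_E, rep_T, rep_X, mul_zero, zero_mul]
      rw [eOp_good hn hdec hle ν (fun hg => good_eq_false ν j h hv (hg _) (hg _)), sub_zero]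
    | tx_right j h ν hv =>
      simp only [map_mul, map_add, rep_E, rep_T, rep_X, mul_zero, zero_mul]
      rw [eOp_good hn hdec hle ν (fun hg => good_eq_false ν j h hv (hg _) (hg _)), add_zero]
    | tx_comm j h ν p hcase =>
      simp only [map_mul, rep_X, mul_zero, zero_mul]
    | braid_ne j h1 h2 ν hv =>
      simp only [map_mul, rep_E, rep_T]
      rw [braid_op hn hdec hle j h1 h2]
    | braid_eq j h1 h2 ν hv =>
      simp only [map_mul, map_add, rep_E, rep_T, map_eval3, rep_X]
      rw [braid_op hn hdec hle j h1 h2]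
      by_cases hg : ∀ p, GoodAt ν p
      · obtain ⟨i0, i1⟩ := good_iji ν j h2 hv (hg _) (hg _)
        have hadj : adjL (ν ⟨j, Nat.lt_of_succ_lt h1⟩ : ℕ) (ν ⟨j + 1, h1⟩) := by
          left
          rw [i0, i1]
        obtain ⟨t, -, he⟩ := ev3_zero hQ hadj i0 (0 : Module.End k (TabV k (IsSYT l N))) 0 0
        rw [he, add_zero, mul_zero, zero_mul, add_zero]
      · rw [eOp_good hn hdec hle ν hg]
        simp only [mul_zero, add_zero]
  · cases h with
    | cyc ν hν p hp =>
      simp only [map_mul, map_pow, map_zero, rep_X, rep_E]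
      by_cases h0 : ν p = ⟨0, hn⟩
      · rw [h0, Pi.single_eq_same]
        simp
      · rw [eOp_good hn hdec hle, mul_zero]
        intro hg
        have := (hg p).1
        rw [cnt_top _ _ _ (by omega), cnt_top _ _ _ (by omega)] at this
        rcases this with h | h
        · exact h0 (Fin.ext h)
        · omega

theorem tw_op (w : Word N) (u : TabV k (IsSYT l N)) :
    ∀ (U V : {f : Fin N → ℕ × ℕ // IsSYT l N f}), permTab (wordProd N w) U.val V.val →
      w.length = invN (wordProd N w) →
      tw (fun j h => tOpTab k (IsSYT l N) j h) w u U = u V := by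
  induction w with
  | nil =>
    intro U V h _
    have : V.val = U.val := (permTab_one _ _).1 h
    rw [tw_nil, Subtype.ext this]
    rfl
  | cons a w ih =>
    intro U V h hl
    obtain ⟨r1, r2⟩ := reduced_cons a w hl
    have hs := descent_std U.2 V.2 h a.1 a.2 r2
    rw [wordProd_cons, permTab_cons] at h
    rw [tw_cons, Module.End.mul_apply, tOp_apply]
    exact (xt_val _ ⟨_, hs⟩).trans (ih ⟨_, hs⟩ V h r1)

theorem rep_indep (hQ : QAdmissible k (AB n) (dB n) Q)
    (hn : 0 < n) (hdec : l.Pairwise (· > ·)) (hle : ∀ x ∈ l, x ≤ n)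
    (ch : {f : Fin N → ℕ × ℕ // IsSYT l N f} × {f : Fin N → ℕ × ℕ // IsSYT l N f} → Word N)
    (hch : ∀ p, permTab (wordProd N (ch p)) p.1.val p.2.val ∧
      (ch p).length = invN (wordProd N (ch p))) :
    LinearIndependent k (cEl hn (fun ν => repHom k n hn N l (Eg k ν))
      (fun j h => repHom k n hn N l (Tg k j h)) ch) := by
  have R := rels_of_hom hn Q _ (repHom k n hn N l) (rep_rel hQ hn hdec hle)
  have key : ∀ p u U, cEl hn (fun ν => repHom k n hn N l (Eg k ν))
      (fun j h => repHom k n hn N l (Tg k j h)) ch p u U = if U = p.1 then u p.2 else 0 := by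
    intro p u U
    have e : cEl hn (fun ν => repHom k n hn N l (Eg k ν))
        (fun j h => repHom k n hn N l (Tg k j h)) ch p =
        eOpTab k n hn (IsSYT l N) (resSeq n hn p.1.val) *
          tw (fun j h => tOpTab k (IsSYT l N) j h) (ch p) := by
      have h1 := cEl_eq R hn (hch p).1
      have h2 := tw_E R hn (ch p) _ _ (hch p).1
      unfold cEl
      rw [h1, h2]
      simp only [rep_E, rep_T]
    rw [e, Module.End.mul_apply, eOp_apply]
    by_cases hU : U = p.1
    · rw [if_pos hU, if_pos (by rw [hU]), hU]
      exact tw_op _ _ _ _ (hch p).1 (hch p).2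
    · rw [if_neg hU, if_neg]
      intro hh
      exact hU (Subtype.ext (res_inj hdec hn hle U.2 p.1.2 hh))
  rw [linearIndependent_iff']
  intro s g hg p hp
  have := congrFun (LinearMap.congr_fun hg (Pi.single p.2 1)) p.1
  rw [LinearMap.sum_apply, Finset.sum_apply, Finset.sum_eq_single p] at this
  · rw [LinearMap.smul_apply, Pi.smul_apply, key, if_pos rfl, Pi.single_eq_same] at this
    simpa using this
  · intro q _ hq
    rw [LinearMap.smul_apply, Pi.smul_apply, key]
    by_cases h1 : p.1 = q.1
    · rw [if_pos h1, Pi.single_eq_of_ne, smul_zero]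
      intro h2
      exact hq (Prod.ext h1.symm h2)
    · rw [if_neg h1, smul_zero]
  · exact fun hh => absurd hp hh

end RepRel

theorem basis_of_cyclotomic_QHA_B
    (k : Type) [Field k] (n : ℕ) (hn : 2 ≤ n)
    (Q : Fin n → Fin n → MvPolynomial (Fin 2) k)
    (hQ : QAdmissible k (AB n) (dB n) Q)
    (l : List ℕ) (hdec : l.Chain' (· > ·)) (hpos : ∀ x ∈ l, 0 < x)
    (hle : ∀ x ∈ l, x ≤ n) :
    -- any two standard tableaux of shape λ_b differ by a place permutation
    (∀ T S : {f : Fin l.sum → ℕ × ℕ // IsSYT l l.sum f},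
      ∃ σ : Equiv.Perm (Fin l.sum), permTab σ T.val S.val) ∧
    -- c_{T,S} = e(res T) τ_{w_{T,S}} e(res S) does not depend on the choice of
    -- reduced expression of w_{T,S}:
    (∀ T S : {f : Fin l.sum → ℕ × ℕ // IsSYT l l.sum f},
      ∀ σ : Equiv.Perm (Fin l.sum), permTab σ T.val S.val →
      ∀ w₁ w₂ : Word l.sum, IsReducedWord l.sum σ w₁ → IsReducedWord l.sum σ w₂ →
        RingQuot.mkAlgHom k (CRel k Q
            (Iβ (AB n) (Pi.single ⟨0, by omega⟩ 1) (wtP n (by omega) l) l.sum)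
            (Pi.single ⟨0, by omega⟩ 1))
          (Eg k (resSeq n (by omega) T.val) * tauWord k l.sum w₁ *
            Eg k (resSeq n (by omega) S.val)) =
        RingQuot.mkAlgHom k (CRel k Q
            (Iβ (AB n) (Pi.single ⟨0, by omega⟩ 1) (wtP n (by omega) l) l.sum)
            (Pi.single ⟨0, by omega⟩ 1))
          (Eg k (resSeq n (by omega) T.val) * tauWord k l.sum w₂ *
            Eg k (resSeq n (by omega) S.val))) ∧
    -- the c_{T,S} form a k-basis of R^{Λ₁}(ξ):
    (∀ ch : {f : Fin l.sum → ℕ × ℕ // IsSYT l l.sum f} ×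
        {f : Fin l.sum → ℕ × ℕ // IsSYT l l.sum f} → Word l.sum,
      (∀ p, permTab (wordProd l.sum (ch p)) p.1.val p.2.val ∧
        (ch p).length = permLength l.sum (wordProd l.sum (ch p))) →
      (LinearIndependent k fun p : {f : Fin l.sum → ℕ × ℕ // IsSYT l l.sum f} ×
          {f : Fin l.sum → ℕ × ℕ // IsSYT l l.sum f} =>
        RingQuot.mkAlgHom k (CRel k Q
            (Iβ (AB n) (Pi.single ⟨0, by omega⟩ 1) (wtP n (by omega) l) l.sum)
            (Pi.single ⟨0, by omega⟩ 1))
          (Eg k (resSeq n (by omega) p.1.val) * tauWord k l.sum (ch p) *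
            Eg k (resSeq n (by omega) p.2.val))) ∧
      Submodule.span k (Set.range fun p : {f : Fin l.sum → ℕ × ℕ // IsSYT l l.sum f} ×
          {f : Fin l.sum → ℕ × ℕ // IsSYT l l.sum f} =>
        RingQuot.mkAlgHom k (CRel k Q
            (Iβ (AB n) (Pi.single ⟨0, by omega⟩ 1) (wtP n (by omega) l) l.sum)
            (Pi.single ⟨0, by omega⟩ 1))
          (Eg k (resSeq n (by omega) p.1.val) * tauWord k l.sum (ch p) *
            Eg k (resSeq n (by omega) p.2.val))) = ⊤) ∧
    -- in particular dim R^{Λ₁}(ξ) = |ST(λ_b)|²: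
    Module.finrank k (RingQuot (CRel k Q
        (Iβ (AB n) (Pi.single ⟨0, by omega⟩ 1) (wtP n (by omega) l) l.sum)
        (Pi.single ⟨0, by omega⟩ 1))) =
      Nat.card {f : Fin l.sum → ℕ × ℕ // IsSYT l l.sum f} *
        Nat.card {f : Fin l.sum → ℕ × ℕ // IsSYT l l.sum f} := by
  have hn0 : 0 < n := by omega
  have hdec' : l.Pairwise (· > ·) := List.isChain_iff_pairwise.1 hdec
  set S := Iβ (AB n) (Pi.single ⟨0, hn0⟩ 1) (wtP n hn0 l) l.sum with hS
  set φ := RingQuot.mkAlgHom k (CRel k Q S (Pi.single ⟨0, hn0⟩ 1)) with hφ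
  have hrel : ∀ a b, CRel k Q S (Pi.single ⟨0, hn0⟩ 1) a b → φ a = φ b :=
    fun a b h => RingQuot.mkAlgHom_rel k h
  have hsurj : Function.Surjective φ := RingQuot.mkAlgHom_surjective k _
  have R := rels_of_hom hn0 Q S φ hrel
  have htau : ∀ w : Word l.sum, φ (tauWord k l.sum w) = tw (fun j h => φ (Tg k j h)) w := by
    intro w
    induction w with
    | nil => rw [tw_nil]; simp [tauWord]
    | cons a w ih =>
      rw [tw_cons, ← ih, ← map_mul]
      simp [tauWord]
  have part3 : ∀ ch : {f : Fin l.sum → ℕ × ℕ // IsSYT l l.sum f} ×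
        {f : Fin l.sum → ℕ × ℕ // IsSYT l l.sum f} → Word l.sum,
      (∀ p, permTab (wordProd l.sum (ch p)) p.1.val p.2.val ∧
        (ch p).length = permLength l.sum (wordProd l.sum (ch p))) →
      (LinearIndependent k fun p : {f : Fin l.sum → ℕ × ℕ // IsSYT l l.sum f} ×
          {f : Fin l.sum → ℕ × ℕ // IsSYT l l.sum f} =>
        φ (Eg k (resSeq n hn0 p.1.val) * tauWord k l.sum (ch p) *
            Eg k (resSeq n hn0 p.2.val))) ∧
      Submodule.span k (Set.range fun p : {f : Fin l.sum → ℕ × ℕ // IsSYT l l.sum f} ×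
          {f : Fin l.sum → ℕ × ℕ // IsSYT l l.sum f} =>
        φ (Eg k (resSeq n hn0 p.1.val) * tauWord k l.sum (ch p) *
            Eg k (resSeq n hn0 p.2.val))) = ⊤ := by
    intro ch hch
    have hch' : ∀ p, permTab (wordProd l.sum (ch p)) p.1.val p.2.val ∧
        (ch p).length = invN (wordProd l.sum (ch p)) :=
      fun p => ⟨(hch p).1, (hch p).2.trans (permLength_eq _)⟩
    have efun : (fun p : {f : Fin l.sum → ℕ × ℕ // IsSYT l l.sum f} ×
          {f : Fin l.sum → ℕ × ℕ // IsSYT l l.sum f} =>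
        φ (Eg k (resSeq n hn0 p.1.val) * tauWord k l.sum (ch p) *
            Eg k (resSeq n hn0 p.2.val))) =
        cEl hn0 (fun ν => φ (Eg k ν)) (fun j h => φ (Tg k j h)) ch := by
      funext p
      unfold cEl
      rw [map_mul, map_mul, htau]
    refine ⟨?_, ?_⟩
    · set ψ := RingQuot.liftAlgHom k (s := CRel k Q S (Pi.single ⟨0, hn0⟩ 1))
        ⟨repHom k n hn0 l.sum l, fun {a b} h => rep_rel hQ hn0 hdec' hle a b h⟩ with hψ
      have hc : ∀ a, ψ (φ a) = repHom k n hn0 l.sum l a := by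
        intro a
        rw [hψ, hφ]
        exact RingQuot.liftAlgHom_mkAlgHom_apply k _ _ a
      apply LinearIndependent.of_comp ψ.toLinearMap
      have := rep_indep hQ hn0 hdec' hle ch hch'
      have htau' : ∀ w : Word l.sum, repHom k n hn0 l.sum l (tauWord k l.sum w) =
          tw (fun j h => repHom k n hn0 l.sum l (Tg k j h)) w := by
        intro w
        induction w with
        | nil => rw [tw_nil]; simp [tauWord]
        | cons a w ih =>
          rw [tw_cons, ← ih, ← map_mul]
          simp [tauWord]
      have efun2 : (fun p => ψ.toLinearMap (φ (Eg k (resSeq n hn0 p.1.val) *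
          tauWord k l.sum (ch p) * Eg k (resSeq n hn0 p.2.val)))) =
          cEl hn0 (fun ν => repHom k n hn0 l.sum l (Eg k ν))
            (fun j h => repHom k n hn0 l.sum l (Tg k j h)) ch := by
        funext p
        show ψ (φ _) = _
        rw [hc, map_mul, map_mul, htau']
        rfl
      rw [← efun2] at this
      exact this
    · rw [efun]
      exact span_top φ hsurj hQ hn0 hdec' hle R ch hch'
  refine ⟨fun T S => permTab_exists T.2 S.2, ?_, part3, ?_⟩
  · intro T U σ hσ w₁ w₂ h₁ h₂
    change φ _ = φ _
    rw [map_mul, map_mul, map_mul, map_mul, htau, htau]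
    have p1 : permTab (wordProd l.sum w₁) T.val U.val := by rw [h₁.1]; exact hσ
    have p2 : permTab (wordProd l.sum w₂) T.val U.val := by rw [h₂.1]; exact hσ
    have c1 := cEl_eq R hn0 p1
    have c2 := cEl_eq R hn0 p2
    refine c1.trans (Eq.trans ?_ c2.symm)
    refine indep_all R hn0 l hdec' hle w₁.length T.val U.val T.2 U.2 w₁ w₂
      (h₁.1.trans h₂.1.symm) p1 rfl (h₂.2.trans h₁.2.symm) ?_
    rw [h₁.1, h₁.2, permLength_eq]
  · have hex : ∀ p : {f : Fin l.sum → ℕ × ℕ // IsSYT l l.sum f} ×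
        {f : Fin l.sum → ℕ × ℕ // IsSYT l l.sum f}, ∃ w : Word l.sum,
        permTab (wordProd l.sum w) p.1.val p.2.val ∧
        w.length = permLength l.sum (wordProd l.sum w) := by
      intro p
      obtain ⟨σ, hσ⟩ := permTab_exists p.1.2 p.2.2
      obtain ⟨w, hw, hw'⟩ := exists_word _ σ rfl
      exact ⟨w, by rw [hw]; exact hσ, by rw [hw, permLength_eq]; exact hw'⟩
    choose ch hch using hex
    obtain ⟨hli, hsp⟩ := part3 ch hch
    rw [Module.finrank_eq_nat_card_basis (Module.Basis.mk hli hsp.ge), Nat.card_prod]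

end QHA
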